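/- For every integer s ≥ 2 there are constants β > 0 and C > 0 such that the following holds. Let g ≤ βn and let G be an n-vertex graph with minimum degree at least g. Then for p = C·p_s(n), with high probability (as n → ∞) the graph G^p = G ∪ G_{n,p} contains a collection of g pairwise vertex-disjoint copies of the complete graph K_{s+1}. -/

import Mathlib

open Finset
open scoped Classical

/-- The degree of a vertex (number of neighbours). -/
noncomputable def degR {V : Type*} (G : SimpleGraph V) (v : V) : ℕ :=
  Nat.card (G.neighborSet v)

/-- The number of edges of a graph on `Fin n`. -/
noncomputable def edgeCount {n : ℕ} (H : SimpleGraph (Fin n)) : ℕ := Nat.card H.edgeSet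

/-- The probability that the binomial random graph `G_{n,p}` satisfies the property `P`. -/
noncomputable def Pr (n : ℕ) (p : ℝ) (P : SimpleGraph (Fin n) → Prop) : ℝ :=
  ∑ H : SimpleGraph (Fin n),
    if P H then p ^ edgeCount H * (1 - p) ^ (n.choose 2 - edgeCount H) else 0

/-- `G` has a `K_r`-factor: a partition of the vertex set into `r`-cliques. -/
def HasCliqueFactor {n : ℕ} (G : SimpleGraph (Fin n)) (r : ℕ) : Prop :=
  ∃ P : Finpartition (Finset.univ : Finset (Fin n)), ∀ c ∈ P.parts, G.IsNClique r c

/-- The threshold function `p_s(n)`: `log n / n` if `s = 2` and `n^{-φ(s)}` with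
`φ(s) = 2s/((s-1)(s+2))` if `s ≥ 3`. -/
noncomputable def pThr (s n : ℕ) : ℝ :=
  if s = 2 then Real.log n / n
  else (n : ℝ) ^ (-(2 * (s : ℝ)) / (((s : ℝ) - 1) * ((s : ℝ) + 2)))

/-- The number of edges of `G` within the vertex set `S`. -/
noncomputable def edgesIn {V : Type*} (G : SimpleGraph V) (S : Set V) : ℕ :=
  Nat.card {e : Sym2 V // e ∈ G.edgeSet ∧ ∀ v ∈ e, v ∈ S}

/-- The number of ordered adjacent pairs between `S` and `T`. -/
noncomputable def edgesBtw {V : Type*} (G : SimpleGraph V) (S T : Set V) : ℕ :=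
  Nat.card {p : V × V // p.1 ∈ S ∧ p.2 ∈ T ∧ G.Adj p.1 p.2}

/-- The edge density of the pair `(S, T)` in `G`. -/
noncomputable def density {V : Type*} (G : SimpleGraph V) (S T : Set V) : ℝ :=
  (edgesBtw G S T : ℝ) / ((S.ncard : ℝ) * (T.ncard : ℝ))

/-- The pair `(S, T)` is `(ε, d)`-regular in `G`. -/
def IsRegularPair {V : Type*} (G : SimpleGraph V) (S T : Set V) (ε d : ℝ) : Prop :=
  ∀ X ⊆ S, ∀ Y ⊆ T, ε * S.ncard ≤ (X.ncard : ℝ) → ε * T.ncard ≤ (Y.ncard : ℝ) →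
    |density G X Y - d| < ε

/-- The pair `(S, T)` is `(ε, d, ϑ)`-super-regular in `G`. -/
def IsSuperRegularPair {V : Type*} (G : SimpleGraph V) (S T : Set V) (ε d ϑ : ℝ) : Prop :=
  IsRegularPair G S T ε d ∧
  (∀ v ∈ S, ϑ * T.ncard ≤ ((T ∩ G.neighborSet v).ncard : ℝ)) ∧
  (∀ v ∈ T, ϑ * S.ncard ≤ ((S ∩ G.neighborSet v).ncard : ℝ))

/-!
Let `L` be a set of at most `g` vertices of linear degree in `G`, chosen as large as possible. With
high probability every linear-sized vertex set contains a copy of `K_s` in the random graph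
(Janson's inequality and a union bound), so each vertex of `L` can be completed greedily to a copy
of `K_{s+1}` inside its neighbourhood. It remains to find `g' = g - |L|` disjoint copies outside
`L`. If `g'` is bounded, the random graph alone provides them. If `g'` is large, then `G - L` has
minimum degree at least `g'` and small linear maximum degree, hence at least `n * g' / 4`
edges. Consider the copies of `K_{s+1}` that take one edge from `G - L` and the other edges from the
random graph. Few pairs of them intersect, so a maximum packing of such copies has size at least
`2 * g'` in expectation. By the Efron–Stein inequality its variance is at most
proportional to its mean, and Chebyshev's inequality finishes the proof. In this last part the
smaller probability `C * n ^ (-φ(s))` suffices also when `s = 2`.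
-/

/-! ### Binomial random subsets -/

section BinomialSubset

variable {α : Type*} {p q : ℝ} {A : Finset α} {f g : Finset α → ℝ} {P Q : Finset α → Prop}

/-- The expectation of `f S`, where the random set `S ⊆ A` contains each element of `A`
independently with probability `p`. Bundling it as a linear map gives linearity for free. -/
noncomputable def binomExpect (p : ℝ) (A : Finset α) : (Finset α → ℝ) →ₗ[ℝ] ℝ :=
  ∑ S ∈ A.powerset, (p ^ #S * (1 - p) ^ (#A - #S)) • LinearMap.proj S

/-- The probability that a `p`-random subset of `A` has the property `P`. -/
noncomputable def binomProb (p : ℝ) (A : Finset α) (P : Finset α → Prop) : ℝ :=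
  binomExpect p A fun S => if P S then 1 else 0

/-- The variance of `f S` for a `p`-random subset `S` of `A`. -/
noncomputable def binomVar (p : ℝ) (A : Finset α) (f : Finset α → ℝ) : ℝ :=
  binomExpect p A fun S => (f S - binomExpect p A f) ^ 2

lemma binomExpect_apply (p : ℝ) (A : Finset α) (f : Finset α → ℝ) :
    binomExpect p A f = ∑ S ∈ A.powerset, p ^ #S * (1 - p) ^ (#A - #S) * f S := by
  simp [binomExpect, LinearMap.sum_apply]

lemma binomExpect_congr (h : ∀ S ⊆ A, f S = g S) : binomExpect p A f = binomExpect p A g := by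
  simp only [binomExpect_apply]
  exact sum_congr rfl fun S hS => by rw [h S (mem_powerset.1 hS)]

lemma binomExpect_const (p : ℝ) (A : Finset α) (c : ℝ) : binomExpect p A (fun _ => c) = c := by
  rw [binomExpect_apply, ← sum_mul, sum_pow_mul_eq_add_pow]
  simp

lemma pow_mul_one_sub_pow_nonneg (hp : p ∈ Set.Icc (0 : ℝ) 1) (k m : ℕ) :
    0 ≤ p ^ k * (1 - p) ^ m :=
  mul_nonneg (pow_nonneg hp.1 k) (pow_nonneg (sub_nonneg.2 hp.2) m)

lemma binomExpect_mono (hp : p ∈ Set.Icc (0 : ℝ) 1) (h : ∀ S ⊆ A, f S ≤ g S) :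
    binomExpect p A f ≤ binomExpect p A g := by
  simp only [binomExpect_apply]
  exact sum_le_sum fun S hS => mul_le_mul_of_nonneg_left (h S (mem_powerset.1 hS))
    (pow_mul_one_sub_pow_nonneg hp _ _)

lemma binomExpect_nonneg (hp : p ∈ Set.Icc (0 : ℝ) 1) (h : ∀ S ⊆ A, 0 ≤ f S) :
    0 ≤ binomExpect p A f := by
  simpa only [binomExpect_const] using binomExpect_mono (f := fun _ => (0 : ℝ)) hp h

lemma binomProb_mono (hp : p ∈ Set.Icc (0 : ℝ) 1) (h : ∀ S ⊆ A, P S → Q S) :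
    binomProb p A P ≤ binomProb p A Q :=
  binomExpect_mono hp fun S hS => by
    have hPQ := h S hS
    split_ifs <;> first | tauto | norm_num

lemma binomProb_not (p : ℝ) (A : Finset α) (P : Finset α → Prop) :
    binomProb p A (fun S => ¬ P S) = 1 - binomProb p A P := by
  rw [binomProb, binomProb, eq_sub_iff_add_eq, ← map_add]
  refine (binomExpect_congr fun S _ => ?_).trans (binomExpect_const p A 1)
  by_cases h : P S <;> simp [h]

lemma binomProb_or_le (hp : p ∈ Set.Icc (0 : ℝ) 1) :
    binomProb p A (fun S => P S ∨ Q S) ≤ binomProb p A P + binomProb p A Q := by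
  rw [binomProb, binomProb, binomProb, ← map_add]
  refine binomExpect_mono hp fun S _ => ?_
  by_cases hP : P S <;> by_cases hQ : Q S <;> simp [hP, hQ]

lemma binomProb_exists_le {ι : Type*} (hp : p ∈ Set.Icc (0 : ℝ) 1) (I : Finset ι)
    (P : ι → Finset α → Prop) :
    binomProb p A (fun S => ∃ i ∈ I, P i S) ≤ ∑ i ∈ I, binomProb p A (P i) := by
  simp only [binomProb]
  rw [← map_sum]
  refine binomExpect_mono hp fun S _ => ?_
  have hterm : ∀ i ∈ I, (0 : ℝ) ≤ if P i S then 1 else 0 := fun i _ => by split_ifs <;> norm_num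
  rw [Finset.sum_apply]
  split_ifs with h
  · obtain ⟨i, hi, hP⟩ := h
    simpa [hP] using single_le_sum hterm hi
  · exact sum_nonneg hterm

lemma binomVar_eq (p : ℝ) (A : Finset α) (f : Finset α → ℝ) :
    binomVar p A f = binomExpect p A (fun S => f S ^ 2) - binomExpect p A f ^ 2 := by
  set m := binomExpect p A f with hm
  have hexpand : (fun S => (f S - m) ^ 2) =
      (fun S => f S ^ 2) - (2 * m) • f + fun _ => m ^ 2 := by
    funext S
    simp only [Pi.add_apply, Pi.sub_apply, Pi.smul_apply, smul_eq_mul]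
    ring
  rw [binomVar, ← hm, hexpand, map_add, map_sub, map_smul, binomExpect_const, ← hm, smul_eq_mul]
  ring

lemma sq_binomExpect_le (hp : p ∈ Set.Icc (0 : ℝ) 1) (A : Finset α) (f : Finset α → ℝ) :
    binomExpect p A f ^ 2 ≤ binomExpect p A fun S => f S ^ 2 := by
  rw [← sub_nonneg, ← binomVar_eq]
  exact binomExpect_nonneg hp fun S _ => sq_nonneg _

/-- Chebyshev's inequality for the lower tail. -/
lemma binomProb_le_expect_sub_le (hp : p ∈ Set.Icc (0 : ℝ) 1) (A : Finset α)
    (f : Finset α → ℝ) {t : ℝ} (ht : 0 < t) :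
    binomProb p A (fun S => f S ≤ binomExpect p A f - t) ≤ binomVar p A f / t ^ 2 := by
  rw [binomVar, div_eq_inv_mul, ← smul_eq_mul, ← map_smul]
  refine binomExpect_mono hp fun S _ => ?_
  rw [Pi.smul_apply, smul_eq_mul, ← div_eq_inv_mul]
  split_ifs with h
  · rw [one_le_div (by positivity), ← neg_sq (f S - _)]
    exact pow_le_pow_left₀ ht.le (by linarith) 2
  · positivity

lemma binomExpect_insert [DecidableEq α] {a : α} (p : ℝ) (ha : a ∉ A) (f : Finset α → ℝ) :
    binomExpect p (insert a A) f =
      (1 - p) * binomExpect p A f + p * binomExpect p A fun S => f (insert a S) := by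
  simp only [binomExpect_apply]
  rw [sum_powerset_insert ha, mul_sum, mul_sum]
  congr 1 <;> refine sum_congr rfl fun S hS => ?_
  · rw [card_insert_of_notMem ha, Nat.succ_sub (card_le_card (mem_powerset.1 hS)), pow_succ]
    ring
  · rw [card_insert_of_notMem ha, card_insert_of_notMem fun h => ha (mem_powerset.1 hS h),
      Nat.succ_sub_succ, pow_succ]
    ring

lemma binomExpect_mono_left (hq : 0 ≤ q) (hqp : q ≤ p) (hp : p ≤ 1) (A : Finset α)
    (hf : Monotone f) : binomExpect q A f ≤ binomExpect p A f := by
  induction A using Finset.induction_on generalizing f with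
  | empty => simp [binomExpect_apply]
  | insert a A ha ih =>
    have hfa : Monotone fun S => f (insert a S) := fun S T h => hf (insert_subset_insert a h)
    have hstep : binomExpect p A f ≤ binomExpect p A fun S => f (insert a S) :=
      binomExpect_mono ⟨hq.trans hqp, hp⟩ fun S _ => hf (subset_insert a S)
    rw [binomExpect_insert _ ha, binomExpect_insert _ ha]
    calc (1 - q) * binomExpect q A f + q * binomExpect q A (fun S => f (insert a S))
        ≤ (1 - q) * binomExpect p A f + q * binomExpect p A (fun S => f (insert a S)) :=
          add_le_add (mul_le_mul_of_nonneg_left (ih hf) (by linarith))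
            (mul_le_mul_of_nonneg_left (ih hfa) hq)
      _ ≤ (1 - p) * binomExpect p A f + p * binomExpect p A (fun S => f (insert a S)) := by
          linarith [mul_nonneg (sub_nonneg.2 hqp) (sub_nonneg.2 hstep)]

lemma binomProb_le_of_antitone (hq : 0 ≤ q) (hqp : q ≤ p) (hp : p ≤ 1) (A : Finset α)
    (hP : Antitone P) : binomProb p A P ≤ binomProb q A P := by
  have hmono : Monotone fun S => if P S then (0 : ℝ) else 1 := fun S T hST => by
    have := hP hST
    by_cases hS : P S <;> by_cases hT : P T <;> simp_all
  have h := binomExpect_mono_left hq hqp hp A hmono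
  have hcompl (r : ℝ) : (binomExpect r A fun S => if P S then (0 : ℝ) else 1) =
      1 - binomProb r A P := by
    rw [← binomProb_not, binomProb]
    exact binomExpect_congr fun S _ => by by_cases hS : P S <;> simp [hS]
  rw [hcompl, hcompl] at h
  linarith

/-- Harris' inequality: the product measure is log-modular, so this is a case of the four
functions theorem. -/
lemma binomExpect_mul_le (hp : p ∈ Set.Icc (0 : ℝ) 1) (A : Finset α) (hf : Monotone f)
    (hg : Antitone g) (hf₀ : 0 ≤ f) (hg₀ : 0 ≤ g) :
    binomExpect p A (fun S => f S * g S) ≤ binomExpect p A f * binomExpect p A g := by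
  set μ : Finset α → ℝ := fun S => p ^ #S * (1 - p) ^ (#A - #S) with hμ
  have hμ₀ : ∀ S, 0 ≤ μ S := fun S => pow_mul_one_sub_pow_nonneg hp _ _
  have hlogmod : ∀ S ⊆ A, ∀ T ⊆ A, μ S * μ T = μ (S ∩ T) * μ (S ∪ T) := fun S hS T hT => by
    have hcard := card_inter_add_card_union S T
    have hSA := card_le_card hS
    have hTA := card_le_card hT
    have hIA := card_le_card (inter_subset_left.trans hS : S ∩ T ⊆ A)
    have hUA := card_le_card (union_subset hS hT)
    simp only [hμ]
    rw [mul_mul_mul_comm, mul_mul_mul_comm (p ^ #(S ∩ T))]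
    simp only [← pow_add]
    congr 2 <;> lia
  have h := A.four_functions_theorem (f₁ := fun S => μ S * (f S * g S)) (f₂ := μ)
    (f₃ := fun S => μ S * g S) (f₄ := fun S => μ S * f S)
    (fun S => mul_nonneg (hμ₀ S) (mul_nonneg (hf₀ S) (hg₀ S))) hμ₀
    (fun S => mul_nonneg (hμ₀ S) (hg₀ S)) (fun S => mul_nonneg (hμ₀ S) (hf₀ S))
    (fun S hS T hT => ?_) (subset_refl A.powerset) (subset_refl A.powerset)
  · have hone : ∑ S ∈ A.powerset, μ S = 1 := by
      simpa [binomExpect_apply] using binomExpect_const p A 1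
    rwa [powerset_sups_powerset_self, powerset_infs_powerset_self, hone, mul_one,
      mul_comm (∑ S ∈ A.powerset, μ S * g S), ← binomExpect_apply, ← binomExpect_apply,
      ← binomExpect_apply] at h
  · calc μ S * (f S * g S) * μ T = μ (S ∩ T) * μ (S ∪ T) * (g S * f S) := by
          rw [← hlogmod S hS T hT]; ring
      _ ≤ μ (S ∩ T) * μ (S ∪ T) * (g (S ∩ T) * f (S ∪ T)) :=
          mul_le_mul_of_nonneg_left
            (mul_le_mul (hg inter_subset_left) (hf subset_union_left) (hf₀ S) (hg₀ _))
            (mul_nonneg (hμ₀ _) (hμ₀ _))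
      _ = μ (S ∩ T) * g (S ∩ T) * (μ (S ∪ T) * f (S ∪ T)) := by ring

variable [DecidableEq α] {a : α}

lemma binomExpect_ite_mem (ha : a ∈ A) (hf : ∀ S, f (insert a S) = f S) :
    binomExpect p A (fun S => if a ∈ S then f S else 0) = p * binomExpect p A f := by
  rw [← insert_erase ha, binomExpect_insert _ (notMem_erase a A),
    binomExpect_insert _ (notMem_erase a A)]
  have habsent : binomExpect p (A.erase a) (fun S => if a ∈ S then f S else 0) = 0 :=
    (binomExpect_congr fun S hS => if_neg fun h => notMem_erase a A (hS h)).trans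
      (binomExpect_const p _ 0)
  simp only [habsent, mem_insert_self, if_true, hf]
  ring

lemma binomExpect_ite_subset {R : Finset α} (hR : R ⊆ A)
    (hf : ∀ a ∈ R, ∀ S, f (insert a S) = f S) :
    binomExpect p A (fun S => if R ⊆ S then f S else 0) = p ^ #R * binomExpect p A f := by
  induction R using Finset.induction_on with
  | empty => simp
  | insert a R ha ih =>
    have hignore : ∀ S, (if R ⊆ insert a S then f (insert a S) else 0) =
        if R ⊆ S then f S else 0 := fun S => by
      simp only [subset_insert_iff_of_notMem ha, hf a (mem_insert_self a R)]
    have hsplit : (fun S => if insert a R ⊆ S then f S else 0) =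
        fun S => if a ∈ S then (if R ⊆ S then f S else 0) else 0 := by
      funext S
      simp only [insert_subset_iff, ite_and]
    rw [hsplit, binomExpect_ite_mem (hR (mem_insert_self a R)) hignore,
      ih ((subset_insert a R).trans hR) fun b hb => hf b (mem_insert_of_mem hb),
      card_insert_of_notMem ha, pow_succ']
    ring

lemma binomExpect_indicator_subset {R : Finset α} (hR : R ⊆ A) :
    binomExpect p A (fun S => if R ⊆ S then 1 else 0) = p ^ #R := by
  simpa [binomExpect_const] using
    binomExpect_ite_subset (p := p) (f := fun _ => 1) hR fun _ _ _ => rfl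

lemma binomVar_insert (p : ℝ) (ha : a ∉ A) (f : Finset α → ℝ) :
    binomVar p (insert a A) f =
      (1 - p) * binomVar p A f + p * binomVar p A (fun S => f (insert a S)) +
        p * (1 - p) * binomExpect p A (fun S => f (insert a S) - f S) ^ 2 := by
  have hdiff : binomExpect p A (fun S => f (insert a S) - f S) =
      binomExpect p A (fun S => f (insert a S)) - binomExpect p A f :=
    map_sub (binomExpect p A) (fun S => f (insert a S)) f
  simp only [binomVar_eq, binomExpect_insert p ha, hdiff]
  ring

/-- The expected squared influence of the elements of `B` on `f S`, for a `p`-random subset `S`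
of `A`. -/
noncomputable def binomEnergy (p : ℝ) (A B : Finset α) (f : Finset α → ℝ) : ℝ :=
  ∑ b ∈ B, binomExpect p A fun S => (f (insert b S) - f (S.erase b)) ^ 2

lemma binomExpect_insert_sq_diff (p : ℝ) (ha : a ∉ A) (f : Finset α → ℝ) :
    (binomExpect p (insert a A) fun S => (f (insert a S) - f (S.erase a)) ^ 2) =
      binomExpect p A fun S => (f (insert a S) - f S) ^ 2 := by
  rw [binomExpect_insert p ha]
  have habsent : (binomExpect p A fun S => (f (insert a S) - f (S.erase a)) ^ 2) =
      binomExpect p A fun S => (f (insert a S) - f S) ^ 2 :=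
    binomExpect_congr fun S hS => by rw [erase_eq_of_notMem fun h => ha (hS h)]
  have hpresent : (binomExpect p A fun S =>
      (f (insert a (insert a S)) - f ((insert a S).erase a)) ^ 2) =
      binomExpect p A fun S => (f (insert a S) - f S) ^ 2 :=
    binomExpect_congr fun S hS => by rw [insert_idem, erase_insert fun h => ha (hS h)]
  rw [habsent, hpresent]
  ring

lemma binomEnergy_insert (p : ℝ) (ha : a ∉ A) (f : Finset α → ℝ) :
    binomEnergy p (insert a A) (insert a A) f =
      (binomExpect p A fun S => (f (insert a S) - f S) ^ 2) +
        ((1 - p) * binomEnergy p A A f + p * binomEnergy p A A fun S => f (insert a S)) := by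
  simp only [binomEnergy]
  rw [sum_insert ha, binomExpect_insert_sq_diff p ha, mul_sum, mul_sum, ← sum_add_distrib]
  refine congrArg _ (sum_congr rfl fun b hb => ?_)
  have hba : a ≠ b := fun h => ha (h ▸ hb)
  simp only [binomExpect_insert p ha, insert_comm b a, erase_insert_of_ne hba]

/-- The Efron–Stein inequality. -/
lemma binomVar_le_binomEnergy (hp : p ∈ Set.Icc (0 : ℝ) 1) (A : Finset α)
    (f : Finset α → ℝ) : binomVar p A f ≤ p * (1 - p) * binomEnergy p A A f := by
  induction A using Finset.induction_on generalizing f with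
  | empty => simp [binomVar, binomEnergy, binomExpect_apply]
  | insert a A ha ih =>
    have hp' : 0 ≤ 1 - p := sub_nonneg.2 hp.2
    rw [binomVar_insert p ha, binomEnergy_insert p ha]
    have habsent := mul_le_mul_of_nonneg_left (ih f) hp'
    have hpresent := mul_le_mul_of_nonneg_left (ih fun S => f (insert a S)) hp.1
    have hjensen := mul_le_mul_of_nonneg_left
      (sq_binomExpect_le hp A fun S => f (insert a S) - f S) (mul_nonneg hp.1 hp')
    linarith

end BinomialSubset

/-! ### Janson's inequality -/

section Janson

variable {α ι : Type*}

lemma one_sub_sum_le_prod_one_sub (I : Finset ι) {x : ι → ℝ}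
    (hx : ∀ i ∈ I, x i ∈ Set.Icc (0 : ℝ) 1) : 1 - ∑ i ∈ I, x i ≤ ∏ i ∈ I, (1 - x i) := by
  induction I using Finset.induction_on with
  | empty => simp
  | insert i I hi ih =>
    have hxI : ∀ j ∈ I, x j ∈ Set.Icc (0 : ℝ) 1 := fun j hj => hx j (mem_insert_of_mem hj)
    have hxi := hx i (mem_insert_self i I)
    rw [sum_insert hi, prod_insert hi]
    have h := mul_le_mul_of_nonneg_left (ih hxI) (sub_nonneg.2 hxi.2)
    linarith [mul_nonneg hxi.1 (sum_nonneg fun j hj => (hxI j hj).1)]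

variable [DecidableEq α]

/-- The indicator of the event that `S` contains none of the sets `R i`, `i ∈ I`. The product form
makes it easy to split off part of the index set. -/
noncomputable def avoidIndicator (R : ι → Finset α) (I : Finset ι) (S : Finset α) : ℝ :=
  ∏ i ∈ I, (1 - if R i ⊆ S then 1 else 0)

variable {R : ι → Finset α} {I : Finset ι} {i : ι} {p : ℝ} {A : Finset α}

lemma avoidIndicator_eq_ite (R : ι → Finset α) (I : Finset ι) (S : Finset α) :
    avoidIndicator R I S = if ∀ i ∈ I, ¬ R i ⊆ S then 1 else 0 := by
  simp only [avoidIndicator]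
  split_ifs with h
  · exact prod_eq_one fun i hi => by simp [h i hi]
  · push Not at h
    obtain ⟨i, hi, hRi⟩ := h
    exact prod_eq_zero hi (by simp [hRi])

lemma avoidIndicator_nonneg (R : ι → Finset α) (I : Finset ι) : 0 ≤ avoidIndicator R I := by
  intro S
  rw [avoidIndicator_eq_ite]
  split_ifs <;> norm_num

lemma avoidIndicator_antitone (R : ι → Finset α) (I : Finset ι) :
    Antitone (avoidIndicator R I) := fun S T hST =>
  prod_le_prod (fun i _ => by split_ifs <;> norm_num) fun i _ => by
    have : R i ⊆ S → R i ⊆ T := fun h => h.trans hST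
    split_ifs <;> first | tauto | norm_num

lemma avoidIndicator_anti_index {I₀ : Finset ι} (h : I₀ ⊆ I) (S : Finset α) :
    avoidIndicator R I S ≤ avoidIndicator R I₀ S := by
  simp only [avoidIndicator_eq_ite]
  have : (∀ i ∈ I, ¬ R i ⊆ S) → ∀ i ∈ I₀, ¬ R i ⊆ S := fun hI i hi => hI i (h hi)
  split_ifs <;> first | tauto | norm_num

/-- Inclusion–exclusion at `i`, in which the sets `R j` disjoint from `R i` are kept exactly and
the remaining ones are handled by a union bound. -/
lemma avoidIndicator_insert_le (hi : i ∉ I) (S : Finset α) :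
    avoidIndicator R (insert i I) S ≤
      avoidIndicator R I S
        - (if R i ⊆ S then avoidIndicator R {j ∈ I | Disjoint (R i) (R j)} S else 0)
        + ∑ j ∈ I with ¬ Disjoint (R i) (R j),
            (if R i ∪ R j ⊆ S then 1 else 0) *
              avoidIndicator R {j ∈ I | Disjoint (R i) (R j)} S := by
  set I₀ := {j ∈ I | Disjoint (R i) (R j)}
  set I₁ := {j ∈ I | ¬ Disjoint (R i) (R j)}
  have hsplit : avoidIndicator R I S = avoidIndicator R I₀ S * avoidIndicator R I₁ S :=
    (prod_filter_mul_prod_filter_not I _ _).symm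
  have hinsert : avoidIndicator R (insert i I) S =
      (1 - if R i ⊆ S then 1 else 0) * avoidIndicator R I S := prod_insert hi
  rw [hinsert, ← sum_mul]
  by_cases hRi : R i ⊆ S
  · have hunion : 1 - ∑ j ∈ I₁, (if R j ⊆ S then (1 : ℝ) else 0) ≤ avoidIndicator R I₁ S :=
      one_sub_sum_le_prod_one_sub I₁ fun j _ => by split_ifs <;> simp
    have h := mul_le_mul_of_nonneg_left hunion (avoidIndicator_nonneg R I₀ S)
    simp only [union_subset_iff, hRi, true_and, if_true]
    linarith
  · simp [union_subset_iff, hRi]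

lemma binomExpect_indicator_mul_avoidIndicator_le (hp : p ∈ Set.Icc (0 : ℝ) 1) {Q : Finset α}
    (hQ : Q ⊆ A) : binomExpect p A (fun S => (if Q ⊆ S then 1 else 0) * avoidIndicator R I S) ≤
      p ^ #Q * binomExpect p A (avoidIndicator R I) := by
  rw [← binomExpect_indicator_subset hQ]
  refine binomExpect_mul_le hp A (fun S T hST => ?_) (avoidIndicator_antitone R I)
    (fun S => by dsimp only; split_ifs <;> norm_num) (avoidIndicator_nonneg R I)
  have : Q ⊆ S → Q ⊆ T := fun h => h.trans hST
  split_ifs <;> first | tauto | norm_num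

lemma binomExpect_ite_avoidIndicator {Q : Finset α} (hQ : Q ⊆ A)
    (hdisj : ∀ i ∈ I, Disjoint Q (R i)) :
    binomExpect p A (fun S => if Q ⊆ S then avoidIndicator R I S else 0) =
      p ^ #Q * binomExpect p A (avoidIndicator R I) :=
  binomExpect_ite_subset hQ fun a ha S => prod_congr rfl fun i hi => by
    simp only [subset_insert_iff_of_notMem (disjoint_left.1 (hdisj i hi) ha)]

lemma binomExpect_avoidIndicator_insert_le (hp : p ∈ Set.Icc (0 : ℝ) 1) (hi : i ∉ I)
    (hRi : R i ⊆ A) (hR : ∀ j ∈ I, R j ⊆ A)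
    (hdep : ∑ j ∈ I with ¬ Disjoint (R i) (R j), p ^ #(R i ∪ R j) ≤ p ^ #(R i) / 2) :
    binomExpect p A (avoidIndicator R (insert i I)) ≤
      (1 - p ^ #(R i) / 2) * binomExpect p A (avoidIndicator R I) := by
  set I₀ := {j ∈ I | Disjoint (R i) (R j)}
  set E₀ := binomExpect p A (avoidIndicator R I₀)
  have hE₀ : binomExpect p A (avoidIndicator R I) ≤ E₀ :=
    binomExpect_mono hp fun S _ => avoidIndicator_anti_index (filter_subset _ I) S
  have hE : 0 ≤ binomExpect p A (avoidIndicator R I) :=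
    binomExpect_nonneg hp fun S _ => avoidIndicator_nonneg R I S
  have hbound : binomExpect p A (avoidIndicator R (insert i I)) ≤
      binomExpect p A (avoidIndicator R I)
        - binomExpect p A (fun S => if R i ⊆ S then avoidIndicator R I₀ S else 0)
        + ∑ j ∈ I with ¬ Disjoint (R i) (R j),
            binomExpect p A fun S => (if R i ∪ R j ⊆ S then 1 else 0) * avoidIndicator R I₀ S := by
    rw [← map_sub, ← map_sum, ← map_add]
    refine binomExpect_mono hp fun S _ => ?_
    simpa only [Pi.add_apply, Pi.sub_apply, Finset.sum_apply] using avoidIndicator_insert_le hi S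
  rw [binomExpect_ite_avoidIndicator hRi fun j hj => (mem_filter.1 hj).2] at hbound
  have hharris := sum_le_sum fun j (hj : j ∈ {j ∈ I | ¬ Disjoint (R i) (R j)}) =>
    binomExpect_indicator_mul_avoidIndicator_le (I := I₀) (R := R) hp
      (union_subset hRi (hR j (mem_filter.1 hj).1))
  rw [← sum_mul] at hharris
  have hdep' := mul_le_mul_of_nonneg_right hdep (hE.trans hE₀)
  have hhalf := mul_le_mul_of_nonneg_left hE₀ (div_nonneg (pow_nonneg hp.1 #(R i)) zero_le_two)
  linarith

/-- Janson's inequality. -/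
lemma binomProb_forall_not_subset_le (hp : p ∈ Set.Icc (0 : ℝ) 1) (hR : ∀ i ∈ I, R i ⊆ A)
    (hdep : ∀ i ∈ I, ∑ j ∈ I with j ≠ i ∧ ¬ Disjoint (R i) (R j), p ^ #(R i ∪ R j) ≤
      p ^ #(R i) / 2) :
    binomProb p A (fun S => ∀ i ∈ I, ¬ R i ⊆ S) ≤ Real.exp (-(∑ i ∈ I, p ^ #(R i)) / 2) := by
  have hprob : binomProb p A (fun S => ∀ i ∈ I, ¬ R i ⊆ S) =
      binomExpect p A (avoidIndicator R I) :=
    binomExpect_congr fun S _ => by rw [avoidIndicator_eq_ite]; congr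
  rw [hprob]
  clear hprob
  induction I using Finset.induction_on with
  | empty =>
    have hone : avoidIndicator R ∅ = fun _ => 1 := by funext; simp [avoidIndicator]
    simp [hone, binomExpect_const]
  | insert i I hi ih =>
    have hpow : ∀ j k, (0 : ℝ) ≤ p ^ #(R j ∪ R k) := fun j k => pow_nonneg hp.1 _
    have hI := ih (fun j hj => hR j (mem_insert_of_mem hj)) fun j hj =>
      (sum_le_sum_of_subset_of_nonneg (filter_subset_filter _ (subset_insert i I))
        fun k _ _ => hpow j k).trans (hdep j (mem_insert_of_mem hj))
    have hdepi : ∑ j ∈ I with ¬ Disjoint (R i) (R j), p ^ #(R i ∪ R j) ≤ p ^ #(R i) / 2 := by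
      refine (sum_le_sum_of_subset_of_nonneg (fun j hj => ?_) fun k _ _ => hpow i k).trans
        (hdep i (mem_insert_self i I))
      obtain ⟨hjI, hj⟩ := mem_filter.1 hj
      exact mem_filter.2 ⟨mem_insert_of_mem hjI, fun h => hi (h ▸ hjI), hj⟩
    have hstep : 1 - p ^ #(R i) / 2 ≤ Real.exp (-(p ^ #(R i) / 2)) := by
      linarith [Real.add_one_le_exp (-(p ^ #(R i) / 2))]
    calc binomExpect p A (avoidIndicator R (insert i I))
        ≤ (1 - p ^ #(R i) / 2) * binomExpect p A (avoidIndicator R I) :=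
          binomExpect_avoidIndicator_insert_le hp hi (hR i (mem_insert_self i I))
            (fun j hj => hR j (mem_insert_of_mem hj)) hdepi
      _ ≤ Real.exp (-(p ^ #(R i) / 2)) * Real.exp (-(∑ j ∈ I, p ^ #(R j)) / 2) :=
          mul_le_mul hstep hI (binomExpect_nonneg hp fun S _ => avoidIndicator_nonneg R I S)
            (Real.exp_pos _).le
      _ = Real.exp (-(∑ j ∈ insert i I, p ^ #(R j)) / 2) := by
          rw [← Real.exp_add, sum_insert hi]
          ring_nf

end Janson

/-! ### Packings of random copies -/

/-- A finite family of copies of some structure: the copy `i` uses the random elements `elems i` and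
occupies the vertices `verts i`, and vertex-disjoint copies share no random element. -/
structure CopyFamily (ι α V : Type*) where
  /-- the copies of the family -/
  index : Finset ι
  /-- the random elements needed by a copy -/
  elems : ι → Finset α
  /-- the vertices of a copy -/
  verts : ι → Finset V
  disjoint_elems : ∀ {i j}, Disjoint (verts i) (verts j) → Disjoint (elems i) (elems j)

namespace CopyFamily

variable {ι α V : Type*} (F : CopyFamily ι α V)

/-- `J` is a set of pairwise vertex-disjoint copies all of whose random elements lie in `S`. -/
def IsPacking (S : Finset α) (J : Finset ι) : Prop :=
  J ⊆ F.index ∧ (∀ i ∈ J, F.elems i ⊆ S) ∧ (J : Set ι).PairwiseDisjoint F.verts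

/-- The largest number of pairwise vertex-disjoint copies present in `S`. -/
noncomputable def packingNumber (S : Finset α) : ℕ :=
  {J ∈ F.index.powerset | F.IsPacking S J}.sup card

/-- The copies other than `i` that share a vertex with `i`. -/
noncomputable def conflicts (i : ι) : Finset ι :=
  {j ∈ F.index | j ≠ i ∧ ¬ Disjoint (F.verts i) (F.verts j)}

/-- The expected number of copies present in a `p`-random set. -/
noncomputable def expectedCount (p : ℝ) : ℝ := ∑ i ∈ F.index, p ^ #(F.elems i)

/-- The dependence condition of the second moment method: given a present copy, the expected number
of further present copies meeting it is at most `1 / 2`. -/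
def WeaklyDependent [DecidableEq α] (p : ℝ) : Prop :=
  ∀ i ∈ F.index, ∑ j ∈ F.conflicts i, p ^ #(F.elems i ∪ F.elems j) ≤ p ^ #(F.elems i) / 2

variable {F} {S T : Finset α} {J : Finset ι} {i j : ι} {a : α} {p : ℝ} {A : Finset α} {K g : ℕ}

lemma mem_conflicts :
    j ∈ F.conflicts i ↔ j ∈ F.index ∧ j ≠ i ∧ ¬ Disjoint (F.verts i) (F.verts j) := by
  simp [conflicts]

lemma IsPacking.card_le_packingNumber (h : F.IsPacking S J) : #J ≤ F.packingNumber S :=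
  le_sup (f := card) (mem_filter.2 ⟨mem_powerset.2 h.1, h⟩)

lemma exists_isPacking_card_eq (F : CopyFamily ι α V) (S : Finset α) :
    ∃ J, F.IsPacking S J ∧ #J = F.packingNumber S := by
  have hempty : ∅ ∈ {J ∈ F.index.powerset | F.IsPacking S J} :=
    mem_filter.2 ⟨empty_mem_powerset _, by simp [IsPacking]⟩
  obtain ⟨J, hJ, hcard⟩ := exists_mem_eq_sup _ ⟨∅, hempty⟩ card
  exact ⟨J, (mem_filter.1 hJ).2, hcard.symm⟩

lemma IsPacking.subset {J' : Finset ι} (h : F.IsPacking S J) (hJ : J' ⊆ J)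
    (hT : ∀ i ∈ J', F.elems i ⊆ T) : F.IsPacking T J' :=
  ⟨hJ.trans h.1, hT, h.2.2.subset (coe_subset.2 hJ)⟩

lemma packingNumber_mono (F : CopyFamily ι α V) : Monotone F.packingNumber := fun S T h => by
  obtain ⟨J, hJ, hcard⟩ := F.exists_isPacking_card_eq S
  rw [← hcard]
  exact (hJ.subset subset_rfl fun i hi => (hJ.2.1 i hi).trans h).card_le_packingNumber

section Deletion

variable [DecidableEq α]

lemma packingNumber_insert_le (F : CopyFamily ι α V) (S : Finset α) (a : α) :
    F.packingNumber (insert a S) ≤ F.packingNumber (S.erase a) + 1 := by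
  obtain ⟨J, hJ, hcard⟩ := F.exists_isPacking_card_eq (insert a S)
  have hwithout : F.IsPacking (S.erase a) {i ∈ J | a ∉ F.elems i} :=
    hJ.subset (filter_subset _ _) fun i hi => by
      obtain ⟨hiJ, hai⟩ := mem_filter.1 hi
      rw [← erase_insert_eq_erase]
      exact subset_erase.2 ⟨hJ.2.1 i hiJ, hai⟩
  have hwith : #{i ∈ J | a ∈ F.elems i} ≤ 1 := by
    refine card_le_one.2 fun i hi j hj => by_contra fun hne => ?_
    obtain ⟨⟨hiJ, hai⟩, hjJ, haj⟩ := mem_filter.1 hi, mem_filter.1 hj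
    exact disjoint_left.1 (F.disjoint_elems (hJ.2.2 hiJ hjJ hne)) hai haj
  have hsplit := card_filter_add_card_filter_not (s := J) (fun i => a ∈ F.elems i)
  have := hwithout.card_le_packingNumber
  lia

lemma IsPacking.packingNumber_le_erase (h : F.IsPacking S J) (hJ : #J = F.packingNumber S)
    (ha : ∀ i ∈ J, a ∉ F.elems i) : F.packingNumber S ≤ F.packingNumber (S.erase a) :=
  hJ ▸ (h.subset subset_rfl fun i hi =>
    subset_erase.2 ⟨h.2.1 i hi, ha i hi⟩).card_le_packingNumber

/-- Deleting an element can only matter if a fixed maximum packing uses it. -/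
lemma sum_packingNumber_sub_erase_le (hK : ∀ i ∈ F.index, #(F.elems i) ≤ K) (S A : Finset α) :
    ∑ a ∈ A, (if a ∈ S then (F.packingNumber (insert a S) : ℝ) - F.packingNumber (S.erase a)
      else 0) ≤ K * F.packingNumber S := by
  obtain ⟨J, hJ, hcard⟩ := F.exists_isPacking_card_eq S
  have hterm : ∀ a ∈ A, (if a ∈ S then
      (F.packingNumber (insert a S) : ℝ) - F.packingNumber (S.erase a) else 0) ≤
        if a ∈ J.biUnion F.elems then 1 else 0 := by
    intro a _
    split_ifs with haS hused
    · rw [sub_le_iff_le_add']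
      exact_mod_cast F.packingNumber_insert_le S a
    · rw [insert_eq_of_mem haS, sub_nonpos]
      exact_mod_cast hJ.packingNumber_le_erase hcard fun i hi hai =>
        hused (mem_biUnion.2 ⟨i, hi, hai⟩)
    · exact zero_le_one
    · exact le_rfl
  have hused : #(A ∩ J.biUnion F.elems) ≤ K * F.packingNumber S :=
    calc #(A ∩ J.biUnion F.elems) ≤ #J * K := (card_le_card inter_subset_right).trans
          (card_biUnion_le_card_mul _ _ _ fun i hi => hK i (hJ.1 hi))
      _ = K * F.packingNumber S := by rw [hcard, mul_comm]
  refine (sum_le_sum hterm).trans ?_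
  rw [sum_ite_mem, sum_const, nsmul_one]
  exact_mod_cast hused

end Deletion

lemma binomVar_packingNumber_le (hp : p ∈ Set.Icc (0 : ℝ) 1)
    (hK : ∀ i ∈ F.index, #(F.elems i) ≤ K) :
    (binomVar p A fun S => (F.packingNumber S : ℝ)) ≤
      K * binomExpect p A fun S => (F.packingNumber S : ℝ) := by
  set ν : Finset α → ℝ := fun S => F.packingNumber S with hν
  have hinfluence : ∀ a ∈ A,
      p * (binomExpect p A fun S => (ν (insert a S) - ν (S.erase a)) ^ 2) ≤
        binomExpect p A fun S => if a ∈ S then ν (insert a S) - ν (S.erase a) else 0 := by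
    intro a ha
    rw [binomExpect_ite_mem (f := fun S => ν (insert a S) - ν (S.erase a)) ha
      fun S => by rw [insert_idem, erase_insert_eq_erase]]
    refine mul_le_mul_of_nonneg_left (binomExpect_mono hp fun S _ => ?_) hp.1
    have hle : ν (insert a S) ≤ ν (S.erase a) + 1 := by
      simp only [hν]
      exact_mod_cast F.packingNumber_insert_le S a
    have hge : ν (S.erase a) ≤ ν (insert a S) :=
      Nat.cast_le.2 (F.packingNumber_mono ((erase_subset a S).trans (subset_insert a S)))
    exact pow_le_of_le_one (by linarith) (by linarith) two_ne_zero
  have henergy : 0 ≤ binomEnergy p A A ν :=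
    sum_nonneg fun a _ => binomExpect_nonneg hp fun S _ => sq_nonneg _
  calc binomVar p A ν ≤ p * (1 - p) * binomEnergy p A A ν := binomVar_le_binomEnergy hp A ν
    _ ≤ p * binomEnergy p A A ν :=
        mul_le_mul_of_nonneg_right (mul_le_of_le_one_right hp.1 (by linarith [hp.1])) henergy
    _ ≤ ∑ a ∈ A, binomExpect p A fun S =>
          if a ∈ S then ν (insert a S) - ν (S.erase a) else 0 := by
        rw [binomEnergy, mul_sum]
        exact sum_le_sum hinfluence
    _ ≤ binomExpect p A ((K : ℝ) • ν) := by
        rw [← map_sum]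
        refine binomExpect_mono hp fun S _ => ?_
        simpa only [Finset.sum_apply, Pi.smul_apply, smul_eq_mul]
          using sum_packingNumber_sub_erase_le hK S A
    _ = K * binomExpect p A ν := by rw [map_smul, smul_eq_mul]

variable [DecidableEq α]

/-- The number of present copies, minus the number of present conflicting pairs, is a lower bound
because the present copies without present conflicts form a packing. -/
lemma sum_sub_sum_conflicts_le_packingNumber (F : CopyFamily ι α V) (S : Finset α) :
    ∑ i ∈ F.index, ((if F.elems i ⊆ S then (1 : ℝ) else 0) -
      ∑ j ∈ F.conflicts i, if F.elems i ∪ F.elems j ⊆ S then 1 else 0) ≤ F.packingNumber S := by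
  set J : Finset ι := {i ∈ F.index | F.elems i ⊆ S ∧ ∀ j ∈ F.conflicts i, ¬ F.elems j ⊆ S}
    with hJdef
  have hJ : F.IsPacking S J := by
    refine ⟨filter_subset _ _, fun i hi => (mem_filter.1 hi).2.1, fun i hi j hj hne => ?_⟩
    obtain ⟨⟨-, -, hfree⟩, hjF, hjS, -⟩ := mem_filter.1 hi, mem_filter.1 hj
    by_contra hmeet
    exact hfree j (mem_conflicts.2 ⟨hjF, hne.symm, hmeet⟩) hjS
  refine le_trans ?_ (Nat.cast_le.2 hJ.card_le_packingNumber)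
  rw [hJdef, card_filter, Nat.cast_sum]
  refine sum_le_sum fun i _ => ?_
  have hterm : ∀ j ∈ F.conflicts i, (0 : ℝ) ≤ if F.elems i ∪ F.elems j ⊆ S then 1 else 0 :=
    fun j _ => by split_ifs <;> norm_num
  by_cases hiS : F.elems i ⊆ S
  · by_cases hfree : ∀ j ∈ F.conflicts i, ¬ F.elems j ⊆ S
    · rw [if_pos hiS, if_pos ⟨hiS, hfree⟩, Nat.cast_one]
      exact sub_le_self _ (sum_nonneg hterm)
    · push Not at hfree
      obtain ⟨j, hj, hjS⟩ := hfree
      have h := single_le_sum hterm hj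
      rw [if_pos (union_subset hiS hjS)] at h
      rw [if_pos hiS]
      refine (sub_nonpos.2 h).trans (Nat.cast_nonneg _)
  · simp [hiS]

lemma half_expectedCount_le_binomExpect_packingNumber (hp : p ∈ Set.Icc (0 : ℝ) 1)
    (hA : ∀ i ∈ F.index, F.elems i ⊆ A) (hdep : F.WeaklyDependent p) :
    F.expectedCount p / 2 ≤ binomExpect p A fun S => (F.packingNumber S : ℝ) := by
  have hpoint : ∑ i ∈ F.index, ((binomExpect p A fun S => if F.elems i ⊆ S then 1 else 0) -
      ∑ j ∈ F.conflicts i, binomExpect p A fun S => if F.elems i ∪ F.elems j ⊆ S then 1 else 0) ≤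
        binomExpect p A fun S => (F.packingNumber S : ℝ) := by
    simp only [← map_sum, ← map_sub]
    refine binomExpect_mono hp fun S _ => ?_
    simpa only [Finset.sum_apply, Pi.sub_apply] using F.sum_sub_sum_conflicts_le_packingNumber S
  refine le_trans ?_ hpoint
  rw [expectedCount, sum_div]
  refine sum_le_sum fun i hi => ?_
  rw [binomExpect_indicator_subset (hA i hi), sum_congr rfl fun j hj =>
    binomExpect_indicator_subset (union_subset (hA i hi) (hA j (mem_conflicts.1 hj).1))]
  linarith [hdep i hi]

theorem binomProb_packingNumber_lt_le (hp : p ∈ Set.Icc (0 : ℝ) 1)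
    (hA : ∀ i ∈ F.index, F.elems i ⊆ A) (hK : ∀ i ∈ F.index, #(F.elems i) ≤ K)
    (hdep : F.WeaklyDependent p) (hg : 4 * (g : ℝ) ≤ F.expectedCount p) :
    binomProb p A (fun S => F.packingNumber S < g) ≤ 8 * K / F.expectedCount p := by
  have hcount : 0 ≤ F.expectedCount p := sum_nonneg fun i _ => pow_nonneg hp.1 _
  set E := binomExpect p A fun S => (F.packingNumber S : ℝ)
  have hEhalf : F.expectedCount p / 2 ≤ E :=
    half_expectedCount_le_binomExpect_packingNumber hp hA hdep
  rcases hcount.eq_or_lt with hzero | hpos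
  · have hg0 : g = 0 := by exact_mod_cast le_antisymm (by linarith) (Nat.cast_nonneg (α := ℝ) g)
    simp [hg0, ← hzero, binomProb, binomExpect_const]
  have hEpos : 0 < E := by linarith
  calc binomProb p A (fun S => F.packingNumber S < g)
      ≤ binomProb p A fun S => (F.packingNumber S : ℝ) ≤ E - E / 2 := by
        refine binomProb_mono hp fun S _ hS => ?_
        have : (F.packingNumber S : ℝ) ≤ g := by exact_mod_cast hS.le
        linarith
    _ ≤ (binomVar p A fun S => (F.packingNumber S : ℝ)) / (E / 2) ^ 2 :=
        binomProb_le_expect_sub_le hp A _ (half_pos hEpos)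
    _ ≤ K * E / (E / 2) ^ 2 :=
        div_le_div_of_nonneg_right (binomVar_packingNumber_le hp hK) (sq_nonneg _)
    _ = 4 * K / E := by field_simp; norm_num
    _ ≤ 4 * K / (F.expectedCount p / 2) :=
        div_le_div_of_nonneg_left (by positivity) (half_pos hpos) hEhalf
    _ = 8 * K / F.expectedCount p := by field_simp; ring

end CopyFamily

/-! ### Cliques in random graphs -/

section CliqueEdges

variable {V : Type*} [DecidableEq V] {T T' : Finset V} {e : Sym2 V} {r : ℕ}

/-- The edges of the complete graph on the vertex set `T`. -/
def cliqueEdges (T : Finset V) : Finset (Sym2 V) := {e ∈ T.sym2 | ¬ e.IsDiag}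

lemma mem_cliqueEdges : e ∈ cliqueEdges T ↔ (∀ v ∈ e, v ∈ T) ∧ ¬ e.IsDiag := by
  simp [cliqueEdges, mem_sym2_iff]

lemma cliqueEdges_mono (h : T ⊆ T') : cliqueEdges T ⊆ cliqueEdges T' :=
  filter_subset_filter _ (sym2_mono h)

lemma cliqueEdges_inter (T T' : Finset V) :
    cliqueEdges T ∩ cliqueEdges T' = cliqueEdges (T ∩ T') := by
  ext e
  simp only [mem_inter, mem_cliqueEdges]
  grind

lemma disjoint_cliqueEdges (h : Disjoint T T') : Disjoint (cliqueEdges T) (cliqueEdges T') := by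
  rw [disjoint_iff_inter_eq_empty, cliqueEdges_inter, disjoint_iff_inter_eq_empty.1 h]
  simp [cliqueEdges]

lemma card_cliqueEdges (T : Finset V) : #(cliqueEdges T) = (#T).choose 2 := by
  rw [cliqueEdges, sym2_eq_image, Sym2.filter_image_mk_not_isDiag, Sym2.card_image_offDiag]

lemma card_cliqueEdges_union (hT : #T = r) (hT' : #T' = r) :
    #(cliqueEdges T ∪ cliqueEdges T') = r.choose 2 + (r.choose 2 - (#(T' ∩ T)).choose 2) := by
  have hcard := card_union_add_card_inter (cliqueEdges T) (cliqueEdges T')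
  rw [cliqueEdges_inter, card_cliqueEdges, card_cliqueEdges, card_cliqueEdges, hT, hT',
    inter_comm] at hcard
  have := Nat.choose_le_choose 2 (hT ▸ card_le_card inter_subset_right : #(T' ∩ T) ≤ r)
  lia

/-- The random graph determined by a random set `S` of edges. -/
abbrev graphOfEdges (S : Finset (Sym2 V)) : SimpleGraph V := SimpleGraph.fromEdgeSet S

lemma isNClique_graphOfEdges_iff {S : Finset (Sym2 V)} :
    (graphOfEdges S).IsNClique r T ↔ #T = r ∧ cliqueEdges T ⊆ S := by
  rw [SimpleGraph.isNClique_iff, SimpleGraph.isClique_iff, and_comm]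
  refine and_congr_right fun _ => ⟨fun h e he => ?_, fun h u hu v hv huv => ?_⟩
  · induction e using Sym2.ind with
    | _ u v =>
      obtain ⟨hmem, hne⟩ := mem_cliqueEdges.1 he
      exact ((SimpleGraph.fromEdgeSet_adj _).1 (h (hmem u (Sym2.mem_mk_left u v))
        (hmem v (Sym2.mem_mk_right u v)) (by simpa using hne))).1
  · refine (SimpleGraph.fromEdgeSet_adj _).2 ⟨h (mem_cliqueEdges.2 ⟨?_, by simpa using huv⟩), huv⟩
    rintro w hw
    rcases Sym2.mem_iff.1 hw with rfl | rfl <;> assumption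

end CliqueEdges

lemma two_mul_choose_two_sub_choose_two {r t : ℕ} (h : t < r) :
    2 * (r.choose 2 - t.choose 2) = (r + t - 1) * (r - t) := by
  have hle := Nat.choose_le_choose 2 h.le
  qify [hle, h.le, (by lia : 1 ≤ r + t)]
  rw [Nat.cast_choose_two, Nat.cast_choose_two]
  ring

section PowerEstimates

variable {x y : ℝ} {e k m r t : ℕ}

lemma pow_mul_pow_sq (h : 2 * e = m * k) : (x ^ k * y ^ e) ^ 2 = (x ^ 2 * y ^ m) ^ k := by
  rw [mul_pow, mul_pow, ← pow_mul, ← pow_mul, ← pow_mul, ← pow_mul, mul_comm e, h, mul_comm k]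

lemma pow_mul_pow_choose_sub_le {ε : ℝ} (hy : y ∈ Set.Icc (0 : ℝ) 1)
    (hε : ε ∈ Set.Icc (0 : ℝ) 1) (h : x ^ 2 * y ^ m ≤ ε ^ 2) (htr : t < r) (hm : m + 1 ≤ r + t) :
    x ^ (r - t) * y ^ (r.choose 2 - t.choose 2) ≤ ε := by
  refine le_of_sq_le_sq ?_ hε.1
  calc (x ^ (r - t) * y ^ (r.choose 2 - t.choose 2)) ^ 2
      = (x ^ 2 * y ^ (r + t - 1)) ^ (r - t) :=
        pow_mul_pow_sq (two_mul_choose_two_sub_choose_two htr)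
    _ ≤ (ε ^ 2) ^ (r - t) := by
        refine pow_le_pow_left₀ (mul_nonneg (sq_nonneg x) (pow_nonneg hy.1 _))
          (le_trans ?_ h) _
        exact mul_le_mul_of_nonneg_left (pow_le_pow_of_le_one hy.1 hy.2 (by lia)) (sq_nonneg x)
    _ ≤ ε ^ 2 := pow_le_of_le_one (sq_nonneg ε) (pow_le_one₀ hε.1 hε.2) (by lia)

lemma le_pow_mul_pow {M : ℝ} (hx : 0 ≤ x) (hy : 0 ≤ y) (hM : 1 ≤ M) (hk : k ≠ 0)
    (h : M ^ 2 ≤ x ^ 2 * y ^ m) (he : 2 * e = m * k) : M ≤ x ^ k * y ^ e := by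
  refine le_of_sq_le_sq ?_ (by positivity)
  calc M ^ 2 ≤ (M ^ 2) ^ k := le_self_pow₀ (one_le_pow₀ hM) hk
    _ ≤ (x ^ 2 * y ^ m) ^ k := pow_le_pow_left₀ (sq_nonneg M) h k
    _ = (x ^ k * y ^ e) ^ 2 := (pow_mul_pow_sq he).symm

end PowerEstimates

section Traces

variable {V : Type*} [Fintype V] [DecidableEq V]

lemma card_filter_inter_eq_le (A Z : Finset V) {r : ℕ} {𝒯 : Finset (Finset V)}
    (h𝒯 : ∀ T ∈ 𝒯, #T = r) : #{T ∈ 𝒯 | T ∩ A = Z} ≤ Fintype.card V ^ (r - #Z) := by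
  calc #{T ∈ 𝒯 | T ∩ A = Z}
      ≤ #(powersetCard (r - #Z) (univ : Finset V)) := by
        refine card_le_card_of_injOn (· \ A) (fun T hT => ?_) fun T hT T' hT' h => ?_
        · obtain ⟨hT, hZ⟩ := mem_filter.1 hT
          have hcard := card_sdiff_add_card_inter T A
          rw [hZ, h𝒯 T hT] at hcard
          exact mem_powersetCard.2 ⟨subset_univ _, by dsimp only; lia⟩
        · rw [← sdiff_union_inter T A, ← sdiff_union_inter T' A, (mem_filter.1 hT).2,
            (mem_filter.1 hT').2]
          exact congrArg (· ∪ Z) h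
    _ = (Fintype.card V).choose (r - #Z) := by rw [card_powersetCard, card_univ]
    _ ≤ Fintype.card V ^ (r - #Z) := Nat.choose_le_pow _ _

/-- To bound a sum over `r`-sets it suffices to bound, for each of the `2 ^ #A` possible
intersections with `A`, one summand times the number of sets with that intersection. -/
lemma sum_le_two_pow_card_mul_of_trace [Nonempty V] (A : Finset V) {r : ℕ}
    {𝒯 : Finset (Finset V)} (h𝒯 : ∀ T ∈ 𝒯, #T = r) {f : Finset V → ℝ} {c : ℝ} (hc : 0 ≤ c)
    (hf : ∀ T ∈ 𝒯, (Fintype.card V : ℝ) ^ (r - #(T ∩ A)) * f T ≤ c) :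
    ∑ T ∈ 𝒯, f T ≤ 2 ^ #A * c := by
  have hfiber : ∀ Z ∈ A.powerset, ∑ T ∈ 𝒯 with T ∩ A = Z, f T ≤ c := by
    intro Z _
    have hpow : (0 : ℝ) < (Fintype.card V : ℝ) ^ (r - #Z) := by
      have : 0 < Fintype.card V := Fintype.card_pos
      positivity
    have hterm : ∀ T ∈ 𝒯.filter (· ∩ A = Z), f T ≤ c / (Fintype.card V : ℝ) ^ (r - #Z) := by
      intro T hT
      obtain ⟨hT𝒯, rfl⟩ := mem_filter.1 hT
      exact (le_div_iff₀' hpow).2 (hf T hT𝒯)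
    calc ∑ T ∈ 𝒯 with T ∩ A = Z, f T
        ≤ #{T ∈ 𝒯 | T ∩ A = Z} • (c / (Fintype.card V : ℝ) ^ (r - #Z)) :=
          sum_le_card_nsmul _ _ _ hterm
      _ ≤ (Fintype.card V : ℝ) ^ (r - #Z) * (c / (Fintype.card V : ℝ) ^ (r - #Z)) := by
          rw [nsmul_eq_mul]
          refine mul_le_mul_of_nonneg_right ?_ (div_nonneg hc hpow.le)
          exact_mod_cast card_filter_inter_eq_le A Z h𝒯
      _ = c := mul_div_cancel₀ c hpow.ne'
  rw [← sum_fiberwise_of_maps_to (g := (· ∩ A)) fun T _ => mem_powerset.2 inter_subset_right]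
  simpa [card_powerset] using sum_le_card_nsmul _ _ _ hfiber

lemma sum_pow_card_cliqueEdges_union_le [Nonempty V] {p : ℝ} (hp : p ∈ Set.Icc (0 : ℝ) 1)
    {m r : ℕ} (hsmall : (Fintype.card V : ℝ) ^ 2 * p ^ m ≤ (1 / 2 ^ (r + 1)) ^ 2) {T : Finset V}
    (hT : #T = r) {𝒯 : Finset (Finset V)}
    (h𝒯 : ∀ T' ∈ 𝒯, #T' = r ∧ T' ≠ T ∧ m + 1 ≤ r + #(T' ∩ T)) :
    ∑ T' ∈ 𝒯, p ^ #(cliqueEdges T ∪ cliqueEdges T') ≤ p ^ #(cliqueEdges T) / 2 := by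
  have hε : (1 / 2 ^ (r + 1) : ℝ) ∈ Set.Icc (0 : ℝ) 1 :=
    ⟨by positivity, div_le_one_of_le₀ (one_le_pow₀ one_le_two) (by positivity)⟩
  have hpr : 0 ≤ p ^ r.choose 2 := pow_nonneg hp.1 _
  have htrace := sum_le_two_pow_card_mul_of_trace T (fun T' hT' => (h𝒯 T' hT').1)
    (mul_nonneg hpr hε.1) (f := fun T' => p ^ #(cliqueEdges T ∪ cliqueEdges T'))
    fun T' hT' => ?_
  · refine htrace.trans_eq ?_
    rw [card_cliqueEdges, hT]
    field_simp
    ring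
  · obtain ⟨hcard, hne, hmeet⟩ := h𝒯 T' hT'
    have hlt : #(T' ∩ T) < r := by
      refine hcard ▸ card_lt_card (inter_subset_left.ssubset_of_ne fun h => hne ?_)
      exact eq_of_subset_of_card_le (inter_eq_left.1 h) (by lia)
    have hle := pow_mul_pow_choose_sub_le hp hε hsmall hlt hmeet
    rw [card_cliqueEdges_union hT hcard, pow_add, mul_left_comm]
    exact mul_le_mul_of_nonneg_left hle hpr

end Traces

section RandomCliques

variable {V : Type*} {r w : ℕ} {p : ℝ}

/-- Every set of at least `w` vertices of `H` contains a copy of `K_r`. -/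
def CliqueRich (H : SimpleGraph V) (r w : ℕ) : Prop :=
  ∀ W : Finset V, w ≤ #W → ∃ T ⊆ W, H.IsNClique r T

variable [DecidableEq V]

/-- The copies of `K_r` with vertices in `U`. -/
def cliqueFamily (U : Finset V) (r : ℕ) : CopyFamily (Finset V) (Sym2 V) V where
  index := powersetCard r U
  elems := cliqueEdges
  verts := id
  disjoint_elems := disjoint_cliqueEdges

lemma sum_powersetCard_pow_card_cliqueEdges (p : ℝ) (U : Finset V) (r : ℕ) :
    ∑ T ∈ powersetCard r U, p ^ #(cliqueEdges T) = (#U).choose r * p ^ r.choose 2 := by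
  rw [sum_congr rfl fun T hT => by rw [card_cliqueEdges, (mem_powersetCard.1 hT).2], sum_const,
    card_powersetCard, nsmul_eq_mul]

lemma expectedCount_cliqueFamily (p : ℝ) (U : Finset V) (r : ℕ) :
    (cliqueFamily U r).expectedCount p = (#U).choose r * p ^ r.choose 2 :=
  sum_powersetCard_pow_card_cliqueEdges p U r

lemma two_le_card_inter_of_not_disjoint_cliqueEdges {T T' : Finset V}
    (h : ¬ Disjoint (cliqueEdges T) (cliqueEdges T')) : 2 ≤ #(T ∩ T') := by
  rw [not_disjoint_iff_nonempty_inter, cliqueEdges_inter, ← card_pos, card_cliqueEdges] at h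
  by_contra! hlt
  exact h.ne' (Nat.choose_eq_zero_of_lt hlt)

variable [Fintype V] [Nonempty V]

lemma weaklyDependent_cliqueFamily (hp : p ∈ Set.Icc (0 : ℝ) 1)
    (hsmall : (Fintype.card V : ℝ) ^ 2 * p ^ r ≤ (1 / 2 ^ (r + 1)) ^ 2) (U : Finset V) :
    (cliqueFamily U r).WeaklyDependent p := by
  intro T hT
  refine sum_pow_card_cliqueEdges_union_le hp hsmall (mem_powersetCard.1 hT).2 fun T' hT' => ?_
  obtain ⟨hindex, hne, hmeet⟩ := CopyFamily.mem_conflicts.1 hT'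
  have hpos : 0 < #(T' ∩ T) :=
    card_pos.2 (not_disjoint_iff_nonempty_inter.1 fun h => hmeet h.symm)
  exact ⟨(mem_powersetCard.1 hindex).2, hne, by lia⟩

lemma binomProb_forall_not_cliqueEdges_subset_le (hp : p ∈ Set.Icc (0 : ℝ) 1)
    (hsmall : (Fintype.card V : ℝ) ^ 2 * p ^ (r + 1) ≤ (1 / 2 ^ (r + 1)) ^ 2) (W : Finset V) :
    binomProb p (cliqueEdges univ) (fun S => ∀ T ∈ powersetCard r W, ¬ cliqueEdges T ⊆ S) ≤
      Real.exp (-((#W).choose r * p ^ r.choose 2) / 2) := by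
  rw [← sum_powersetCard_pow_card_cliqueEdges]
  refine binomProb_forall_not_subset_le hp (fun T _ => cliqueEdges_mono (subset_univ T))
    fun T hT => ?_
  refine sum_pow_card_cliqueEdges_union_le hp hsmall (mem_powersetCard.1 hT).2 fun T' hT' => ?_
  simp only [mem_filter] at hT'
  obtain ⟨hindex, hne, hmeet⟩ := hT'
  have := two_le_card_inter_of_not_disjoint_cliqueEdges fun h => hmeet h.symm
  exact ⟨(mem_powersetCard.1 hindex).2, hne, by lia⟩

lemma binomProb_not_cliqueRich_le (hp : p ∈ Set.Icc (0 : ℝ) 1)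
    (hsmall : (Fintype.card V : ℝ) ^ 2 * p ^ (r + 1) ≤ (1 / 2 ^ (r + 1)) ^ 2)
    (hcount : 4 * (Fintype.card V : ℝ) ≤ w.choose r * p ^ r.choose 2) :
    binomProb p (cliqueEdges (univ : Finset V)) (fun S => ¬ CliqueRich (graphOfEdges S) r w) ≤
      Real.exp (-Fintype.card V) := by
  set N := Fintype.card V
  have hfixed : ∀ W ∈ ({W | w ≤ #W} : Finset (Finset V)), binomProb p (cliqueEdges univ)
      (fun S => ∀ T ∈ powersetCard r W, ¬ cliqueEdges T ⊆ S) ≤ Real.exp (-2 * N) := by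
    intro W hW
    refine (binomProb_forall_not_cliqueEdges_subset_le hp hsmall W).trans (Real.exp_le_exp.2 ?_)
    have hchoose : (w.choose r : ℝ) ≤ (#W).choose r := by
      exact_mod_cast Nat.choose_le_choose r (mem_filter.1 hW).2
    have := mul_le_mul_of_nonneg_right hchoose (pow_nonneg hp.1 (r.choose 2))
    linarith
  have hsets : (#{W : Finset V | w ≤ #W} : ℝ) ≤ Real.exp N := by
    have hcard : #{W : Finset V | w ≤ #W} ≤ 2 ^ N :=
      (card_le_univ _).trans_eq (Fintype.card_finset (α := V))
    calc (#{W : Finset V | w ≤ #W} : ℝ) ≤ 2 ^ N := by exact_mod_cast hcard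
      _ ≤ Real.exp 1 ^ N :=
        pow_le_pow_left₀ zero_le_two (by linarith [Real.add_one_le_exp (1 : ℝ)]) N
      _ = Real.exp N := by rw [← Real.exp_nat_mul, mul_one]
  calc binomProb p (cliqueEdges univ) (fun S => ¬ CliqueRich (graphOfEdges S) r w)
      ≤ binomProb p (cliqueEdges univ) fun S => ∃ W ∈ ({W | w ≤ #W} : Finset (Finset V)),
          ∀ T ∈ powersetCard r W, ¬ cliqueEdges T ⊆ S := by
        refine binomProb_mono hp fun S _ hS => ?_
        simp only [CliqueRich, not_forall, not_exists, not_and] at hS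
        obtain ⟨W, hW, hfree⟩ := hS
        refine ⟨W, by simpa using hW, fun T hT hTS => ?_⟩
        obtain ⟨hTW, hTr⟩ := mem_powersetCard.1 hT
        exact hfree T hTW (isNClique_graphOfEdges_iff.2 ⟨hTr, hTS⟩)
    _ ≤ #{W : Finset V | w ≤ #W} • Real.exp (-2 * N) :=
        (binomProb_exists_le hp _ _).trans (sum_le_card_nsmul _ _ _ hfixed)
    _ ≤ Real.exp N * Real.exp (-2 * N) := by
        rw [nsmul_eq_mul]
        exact mul_le_mul_of_nonneg_right hsets (Real.exp_pos _).le
    _ = Real.exp (-N) := by rw [← Real.exp_add]; ring_nf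

lemma binomProb_packingNumber_cliqueFamily_lt_le (hp : p ∈ Set.Icc (0 : ℝ) 1)
    (hsmall : (Fintype.card V : ℝ) ^ 2 * p ^ r ≤ (1 / 2 ^ (r + 1)) ^ 2) {U : Finset V} {g : ℕ}
    (hg : 4 * (g : ℝ) ≤ (#U).choose r * p ^ r.choose 2) :
    binomProb p (cliqueEdges univ) (fun S => (cliqueFamily U r).packingNumber S < g) ≤
      8 * r.choose 2 / ((#U).choose r * p ^ r.choose 2) := by
  rw [← expectedCount_cliqueFamily] at hg ⊢
  refine CopyFamily.binomProb_packingNumber_lt_le hp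
    (fun T _ => cliqueEdges_mono (subset_univ T)) (fun T hT => ?_)
    (weaklyDependent_cliqueFamily hp hsmall U) hg
  exact ((card_cliqueEdges T).trans (by rw [(mem_powersetCard.1 hT).2])).le

end RandomCliques

/-! ### Cliques through given edges -/

/-- The edge probability `q` is balanced for completing given edges to copies of `K_{s+1}` among `N`
vertices: an edge has about `N ^ (s - 1) * q ^ ((s + 1).choose 2 - 1) ≤ c / N` completions in
expectation, whereas a vertex lies in at least about one copy of `K_t` for every `t ≤ s`. -/
structure IsCliqueBalanced (N q c : ℝ) (s : ℕ) : Prop where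
  pos : 0 < N
  mem_Icc : q ∈ Set.Icc (0 : ℝ) 1
  one_le : 1 ≤ c
  upper : N ^ s * q ^ ((s + 1).choose 2 - 1) ≤ c
  lower : ∀ t, 1 ≤ t → t ≤ s → 1 ≤ N ^ (t - 1) * q ^ t.choose 2

/-- The share of the root `f` in the expected number of rooted copies of `K_{s+1}` that meet a
given copy with vertex set `A`. The three terms account for zero, one and two ends of `f` in `A`. -/
noncomputable def rootWeight {V : Type*} [DecidableEq V] (N q c : ℝ) (A : Finset V) (f : Sym2 V) :
    ℝ :=
  c / N ^ 2 + (if ∃ v ∈ A, v ∈ f then c / N else 0) + if f ∈ cliqueEdges A then c * q else 0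

/-- The copies of `K_r` in `U` with a distinguished edge, the root, in `F`: the copy `(f, T)` has
vertex set `T` and root `f`, and it needs all random edges inside `T` except for `f`. -/
def rootedCliqueFamily {V : Type*} [DecidableEq V] (F : Finset (Sym2 V)) (U : Finset V) (r : ℕ) :
    CopyFamily (Sym2 V × Finset V) (Sym2 V) V where
  index := {i ∈ F ×ˢ powersetCard r U | i.1 ∈ cliqueEdges i.2}
  elems i := (cliqueEdges i.2).erase i.1
  verts := Prod.snd
  disjoint_elems h := (disjoint_cliqueEdges h).mono (erase_subset _ _) (erase_subset _ _)

namespace IsCliqueBalanced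

variable {N q c : ℝ} {s b k m t x : ℕ}

lemma pow_mul_pow_sub_mul_pow_le (h : IsCliqueBalanced N q c s) (ht : 1 ≤ t) (hts : t ≤ s)
    (hx : x + b ≤ t.choose 2) (hk : k + t + m = s + 1) :
    N ^ k * q ^ ((s + 1).choose 2 - 1 - x) * N ^ m ≤ c * q ^ b := by
  obtain ⟨hN, ⟨hq0, hq1⟩, -, hupper, hlower⟩ := h
  have hpascal : (s + 1).choose 2 = s + s.choose 2 := by
    rw [Nat.choose_succ_succ' s 1, Nat.choose_one_right]
  have hchoose := Nat.choose_le_choose 2 hts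
  calc N ^ k * q ^ ((s + 1).choose 2 - 1 - x) * N ^ m
      ≤ N ^ k * q ^ ((s + 1).choose 2 - 1 - t.choose 2 + b) * N ^ m := by
        gcongr ?_ * ?_ * ?_
        exact pow_le_pow_of_le_one hq0 hq1 (by lia)
    _ ≤ N ^ k * q ^ ((s + 1).choose 2 - 1 - t.choose 2 + b) * N ^ m *
          (N ^ (t - 1) * q ^ t.choose 2) :=
        le_mul_of_one_le_right (by positivity) (hlower t ht hts)
    _ = N ^ (k + m + (t - 1)) * q ^ ((s + 1).choose 2 - 1 - t.choose 2 + t.choose 2) * q ^ b := by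
        ring
    _ = N ^ s * q ^ ((s + 1).choose 2 - 1) * q ^ b := by
        rw [Nat.sub_add_cancel (by lia), (by lia : k + m + (t - 1) = s)]
    _ ≤ c * q ^ b := by gcongr

variable {V : Type*} [DecidableEq V] {A : Finset V} {f : Sym2 V} {F : Finset (Sym2 V)}

lemma le_rootWeight (h : IsCliqueBalanced N q c s) (hf : ¬ f.IsDiag) (ht : 1 ≤ t) (hts : t ≤ s)
    (hx : x ≤ t.choose 2) (hxf : f ∈ cliqueEdges A → x + 1 ≤ t.choose 2)
    (hk : k + t + 2 = s + 1 + #(f.toFinset ∩ A)) :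
    N ^ k * q ^ ((s + 1).choose 2 - 1 - x) ≤ rootWeight N q c A f := by
  have hN := h.pos
  have hq := h.mem_Icc.1
  have hc : 0 < c := zero_lt_one.trans_le h.one_le
  have hcard : #f.toFinset = 2 := Sym2.card_toFinset_of_not_isDiag _ hf
  have hle : #(f.toFinset ∩ A) ≤ 2 := hcard ▸ card_le_card inter_subset_left
  have hone : 0 ≤ if ∃ v ∈ A, v ∈ f then c / N else 0 := by split_ifs <;> positivity
  have htwo : 0 ≤ if f ∈ cliqueEdges A then c * q else 0 := by split_ifs <;> positivity
  rw [rootWeight]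
  interval_cases hends : #(f.toFinset ∩ A)
  · have := h.pow_mul_pow_sub_mul_pow_le (b := 0) (k := k) (m := 2) ht hts hx hk
    rw [pow_zero, mul_one, ← le_div_iff₀ (by positivity)] at this
    linarith
  · have := h.pow_mul_pow_sub_mul_pow_le (b := 0) (k := k) (m := 1) ht hts hx (by lia)
    rw [pow_zero, mul_one, pow_one, ← le_div_iff₀ hN] at this
    have hmeet : ∃ v ∈ A, v ∈ f := by
      obtain ⟨v, hv⟩ := card_pos.1 (hends ▸ one_pos)
      exact ⟨v, (mem_inter.1 hv).2, Sym2.mem_toFinset.1 (mem_inter.1 hv).1⟩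
    rw [if_pos hmeet]
    have : 0 ≤ c / N ^ 2 := by positivity
    linarith
  · have hsub : f.toFinset ⊆ A :=
      inter_eq_left.1 (eq_of_subset_of_card_le inter_subset_left (by lia))
    have hfA : f ∈ cliqueEdges A :=
      mem_cliqueEdges.2 ⟨fun v hv => hsub (Sym2.mem_toFinset.2 hv), hf⟩
    have := h.pow_mul_pow_sub_mul_pow_le (b := 1) (k := k) (m := 0) ht hts (hxf hfA) (by lia)
    rw [pow_zero, mul_one, pow_one] at this
    rw [if_pos hfA]
    have : 0 ≤ c / N ^ 2 := by positivity
    linarith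

lemma pow_le_rootWeight (h : IsCliqueBalanced N q c s) (hf : f ∈ cliqueEdges A) (hk : k ≠ 0) :
    q ^ k ≤ rootWeight N q c A f := by
  have hN := h.pos
  have hq := h.mem_Icc.1
  have hc := h.one_le
  calc q ^ k ≤ q := pow_le_of_le_one hq h.mem_Icc.2 hk
    _ ≤ c * q := le_mul_of_one_le_left hq hc
    _ ≤ rootWeight N q c A f := by
      rw [rootWeight, if_pos hf]
      have : 0 ≤ if ∃ v ∈ A, v ∈ f then c / N else 0 := by split_ifs <;> positivity
      have : 0 ≤ c / N ^ 2 := by positivity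
      linarith

lemma rootWeight_nonneg (h : IsCliqueBalanced N q c s) (A : Finset V) (f : Sym2 V) :
    0 ≤ rootWeight N q c A f := by
  have hN := h.pos
  have hq := h.mem_Icc.1
  have hc := h.one_le
  rw [rootWeight]
  split_ifs <;> positivity

lemma sum_rootWeight_le (h : IsCliqueBalanced N q c s) {D : ℝ}
    (hD : ∀ v ∈ A, (#{f ∈ F | v ∈ f} : ℝ) ≤ D) :
    ∑ f ∈ F, rootWeight N q c A f ≤
      #F * (c / N ^ 2) + #A * D * (c / N) + (#A).choose 2 * (c * q) := by
  have hN := h.pos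
  have hq := h.mem_Icc.1
  have hc := h.one_le
  have hone : (#{f ∈ F | ∃ v ∈ A, v ∈ f} : ℝ) ≤ #A * D := by
    have hcover : {f ∈ F | ∃ v ∈ A, v ∈ f} ⊆ A.biUnion fun v => {f ∈ F | v ∈ f} := fun f hf => by
      obtain ⟨hfF, v, hvA, hvf⟩ := mem_filter.1 hf
      exact mem_biUnion.2 ⟨v, hvA, mem_filter.2 ⟨hfF, hvf⟩⟩
    calc (#{f ∈ F | ∃ v ∈ A, v ∈ f} : ℝ) ≤ ∑ v ∈ A, (#{f ∈ F | v ∈ f} : ℝ) := by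
          exact_mod_cast (card_le_card hcover).trans card_biUnion_le
      _ ≤ #A * D := by simpa using sum_le_card_nsmul _ _ _ hD
  have htwo : (#{f ∈ F | f ∈ cliqueEdges A} : ℝ) ≤ (#A).choose 2 := by
    rw [← card_cliqueEdges]
    exact_mod_cast card_le_card fun f hf => (mem_filter.1 hf).2
  simp only [rootWeight, sum_add_distrib, ← sum_filter, sum_const, nsmul_eq_mul]
  gcongr

end IsCliqueBalanced

section RootedCliques

variable {V : Type*} [DecidableEq V] {F : Finset (Sym2 V)} {U : Finset V} {r s : ℕ}
  {i j : Sym2 V × Finset V}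

lemma mem_index_rootedCliqueFamily :
    i ∈ (rootedCliqueFamily F U r).index ↔
      i.1 ∈ F ∧ i.2 ⊆ U ∧ #i.2 = r ∧ i.1 ∈ cliqueEdges i.2 := by
  simp [rootedCliqueFamily, and_assoc]

lemma card_elems_rootedCliqueFamily (hi : i ∈ (rootedCliqueFamily F U r).index) :
    #((rootedCliqueFamily F U r).elems i) = r.choose 2 - 1 := by
  obtain ⟨-, -, hcard, hroot⟩ := mem_index_rootedCliqueFamily.1 hi
  rw [rootedCliqueFamily, card_erase_of_mem hroot, card_cliqueEdges, hcard]

lemma card_mul_choose_le_card_index (hF : F ⊆ cliqueEdges U) (r : ℕ) :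
    #F * (#U - 2).choose r ≤ #(rootedCliqueFamily F U (r + 2)).index := by
  rw [card_eq_sum_card_fiberwise (f := Prod.fst) (t := F)
    fun i hi => (mem_index_rootedCliqueFamily.1 hi).1, ← smul_eq_mul]
  refine card_nsmul_le_sum _ _ _ fun f hf => ?_
  obtain ⟨hfU, hdiag⟩ := mem_cliqueEdges.1 (hF hf)
  have hsub : f.toFinset ⊆ U := fun v hv => hfU v (Sym2.mem_toFinset.1 hv)
  have hends : #f.toFinset = 2 := Sym2.card_toFinset_of_not_isDiag _ hdiag
  rw [← hends, ← card_sdiff_of_subset hsub, ← card_powersetCard]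
  refine card_le_card_of_injOn (fun T => (f, f.toFinset ∪ T)) (fun T hT => ?_)
    fun T hT T' hT' h => ?_
  · obtain ⟨hTU, hTr⟩ := mem_powersetCard.1 hT
    have hdisj := disjoint_sdiff.mono_right hTU
    refine mem_coe.2 (mem_filter.2 ⟨mem_index_rootedCliqueFamily.2 ⟨hf,
      union_subset hsub (hTU.trans sdiff_subset), ?_, mem_cliqueEdges.2 ⟨?_, hdiag⟩⟩, rfl⟩)
    · rw [card_union_of_disjoint hdisj, hends, hTr, add_comm]
    · exact fun v hv => mem_union_left _ (Sym2.mem_toFinset.2 hv)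
  · have hdisj := disjoint_sdiff.mono_right (mem_powersetCard.1 hT).1
    have hdisj' := disjoint_sdiff.mono_right (mem_powersetCard.1 hT').1
    rw [← union_sdiff_cancel_left hdisj, ← union_sdiff_cancel_left hdisj']
    exact congrArg (· \ f.toFinset) (Prod.mk.inj h).2

lemma mul_pow_le_expectedCount_rootedCliqueFamily (hF : F ⊆ cliqueEdges U) {q : ℝ} (hq : 0 ≤ q)
    (r : ℕ) : #F * (#U - 2).choose r * q ^ ((r + 2).choose 2 - 1) ≤
      (rootedCliqueFamily F U (r + 2)).expectedCount q := by
  rw [CopyFamily.expectedCount, sum_congr rfl fun i hi => by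
    rw [card_elems_rootedCliqueFamily hi], sum_const, nsmul_eq_mul]
  gcongr
  exact_mod_cast card_mul_choose_le_card_index hF r

lemma card_inter_union_toFinset_add {T A : Finset V} {f : Sym2 V} (hf : f ∈ cliqueEdges T) :
    #(T ∩ (A ∪ f.toFinset)) + #(f.toFinset ∩ A) = #(T ∩ A) + 2 := by
  obtain ⟨hfT, hdiag⟩ := mem_cliqueEdges.1 hf
  have hsub : f.toFinset ⊆ T := fun v hv => hfT v (Sym2.mem_toFinset.1 hv)
  rw [inter_union_distrib_left, inter_eq_right.2 hsub, ← Sym2.card_toFinset_of_not_isDiag _ hdiag,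
    ← card_union_add_card_inter (T ∩ A), inter_right_comm, inter_eq_right.2 hsub]

lemma card_elems_inter_le :
    #((rootedCliqueFamily F U r).elems i ∩ (rootedCliqueFamily F U r).elems j) ≤
      (#(j.2 ∩ i.2)).choose 2 := by
  rw [← card_cliqueEdges, ← cliqueEdges_inter, inter_comm]
  exact card_le_card (inter_subset_inter (erase_subset _ _) (erase_subset _ _))

lemma card_elems_inter_lt (hj : j.1 ∈ cliqueEdges j.2) (hroot : j.1 ∈ cliqueEdges i.2) :
    #((rootedCliqueFamily F U r).elems i ∩ (rootedCliqueFamily F U r).elems j) <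
      (#(j.2 ∩ i.2)).choose 2 := by
  rw [← card_cliqueEdges, ← cliqueEdges_inter]
  refine card_lt_card ((ssubset_iff_of_subset ?_).2 ⟨j.1, mem_inter.2 ⟨hj, hroot⟩, ?_⟩)
  · rw [inter_comm]
    exact inter_subset_inter (erase_subset _ _) (erase_subset _ _)
  · simp [rootedCliqueFamily]

lemma card_elems_union
    (hj : j ∈ (rootedCliqueFamily F U r).index) :
    #((rootedCliqueFamily F U r).elems i ∪ (rootedCliqueFamily F U r).elems j) =
      #((rootedCliqueFamily F U r).elems i) + (r.choose 2 - 1 -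
        #((rootedCliqueFamily F U r).elems i ∩ (rootedCliqueFamily F U r).elems j)) := by
  have hcard := card_union_add_card_inter ((rootedCliqueFamily F U r).elems i)
    ((rootedCliqueFamily F U r).elems j)
  have hle := card_le_card (inter_subset_right (s₁ := (rootedCliqueFamily F U r).elems i)
    (s₂ := (rootedCliqueFamily F U r).elems j))
  rw [card_elems_rootedCliqueFamily hj] at hcard hle
  lia

variable [Fintype V] {f : Sym2 V} {T : Finset V} {q c : ℝ}

lemma pow_mul_pow_card_elems_union_le (h : IsCliqueBalanced (Fintype.card V) q c s)
    (hi : i ∈ (rootedCliqueFamily F U (s + 1)).index)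
    (hj : (f, T) ∈ (rootedCliqueFamily F U (s + 1)).conflicts i) :
    (Fintype.card V : ℝ) ^ (s + 1 - #(T ∩ (i.2 ∪ f.toFinset))) *
        q ^ #((rootedCliqueFamily F U (s + 1)).elems i ∪
          (rootedCliqueFamily F U (s + 1)).elems (f, T)) ≤
      q ^ #((rootedCliqueFamily F U (s + 1)).elems i) *
        rootWeight (Fintype.card V) q c i.2 f := by
  obtain ⟨hjF, hne, hmeet⟩ := CopyFamily.mem_conflicts.1 hj
  obtain ⟨-, -, hicard, -⟩ := mem_index_rootedCliqueFamily.1 hi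
  obtain ⟨-, -, hjcard, hjroot⟩ := mem_index_rootedCliqueFamily.1 hjF
  rw [card_elems_union hjF, pow_add, mul_left_comm]
  refine mul_le_mul_of_nonneg_left ?_ (pow_nonneg h.mem_Icc.1 _)
  have hpos : 0 < #(T ∩ i.2) :=
    card_pos.2 (not_disjoint_iff_nonempty_inter.1 fun hd => hmeet hd.symm)
  have htrace := card_inter_union_toFinset_add (A := i.2) hjroot
  have hle : #(T ∩ (i.2 ∪ f.toFinset)) ≤ s + 1 := hjcard ▸ card_le_card inter_subset_left
  rcases (hjcard ▸ card_le_card inter_subset_left : #(T ∩ i.2) ≤ s + 1).lt_or_eq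
    with hlt | heq
  · exact h.le_rootWeight (mem_cliqueEdges.1 hjroot).2 hpos (Nat.lt_succ_iff.1 hlt)
      card_elems_inter_le (card_elems_inter_lt hjroot) (by lia)
  · have hsame : T = i.2 :=
      eq_of_subset_of_card_le (inter_eq_left.1 (eq_of_subset_of_card_le inter_subset_left
        (by lia))) (by lia)
    have hother : f ∈ (rootedCliqueFamily F U (s + 1)).elems i :=
      mem_erase.2 ⟨fun hroot => hne (Prod.ext hroot hsame), hsame ▸ hjroot⟩
    have hshared : #((rootedCliqueFamily F U (s + 1)).elems i ∩
        (rootedCliqueFamily F U (s + 1)).elems (f, T)) < (s + 1).choose 2 - 1 := by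
      rw [← card_elems_rootedCliqueFamily hi]
      refine card_lt_card ((ssubset_iff_of_subset inter_subset_left).2 ⟨f, hother, ?_⟩)
      simp [rootedCliqueFamily]
    have hall : #(T ∩ (i.2 ∪ f.toFinset)) = s + 1 :=
      hle.antisymm (heq ▸ card_le_card (inter_subset_inter_left subset_union_left))
    rw [hall, Nat.sub_self, pow_zero, one_mul]
    exact h.pow_le_rootWeight (hsame ▸ hjroot) (by lia)

lemma sum_conflicts_with_root_le (h : IsCliqueBalanced (Fintype.card V) q c s)
    (hi : i ∈ (rootedCliqueFamily F U (s + 1)).index) (f : Sym2 V) :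
    ∑ T ∈ powersetCard (s + 1) U with (f, T) ∈ (rootedCliqueFamily F U (s + 1)).conflicts i,
        q ^ #((rootedCliqueFamily F U (s + 1)).elems i ∪
          (rootedCliqueFamily F U (s + 1)).elems (f, T)) ≤
      2 ^ (s + 3) * (q ^ #((rootedCliqueFamily F U (s + 1)).elems i) *
        rootWeight (Fintype.card V) q c i.2 f) := by
  have : Nonempty V := Fintype.card_pos_iff.1 (by exact_mod_cast h.pos)
  have hcard : #(i.2 ∪ f.toFinset) ≤ s + 3 := by
    have hicard := (mem_index_rootedCliqueFamily.1 hi).2.2.1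
    have hunion := card_union_le i.2 f.toFinset
    have hends := f.card_toFinset
    split_ifs at hends <;> lia
  have hweight : 0 ≤ q ^ #((rootedCliqueFamily F U (s + 1)).elems i) *
      rootWeight (Fintype.card V) q c i.2 f :=
    mul_nonneg (pow_nonneg h.mem_Icc.1 _) (h.rootWeight_nonneg i.2 f)
  refine (sum_le_two_pow_card_mul_of_trace (i.2 ∪ f.toFinset)
    (fun T hT => (mem_powersetCard.1 (mem_filter.1 hT).1).2) hweight fun T hT =>
      pow_mul_pow_card_elems_union_le h hi (mem_filter.1 hT).2).trans ?_
  exact mul_le_mul_of_nonneg_right (pow_le_pow_right₀ one_le_two hcard) hweight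

lemma weaklyDependent_rootedCliqueFamily (h : IsCliqueBalanced (Fintype.card V) q c s) {D : ℝ}
    (hD : ∀ v ∈ U, (#{f ∈ F | v ∈ f} : ℝ) ≤ D)
    (hsmall : 2 ^ (s + 3) * (#F * (c / (Fintype.card V : ℝ) ^ 2) +
      ((s + 1 : ℕ) : ℝ) * D * (c / Fintype.card V) + (s + 1).choose 2 * (c * q)) ≤ 1 / 2) :
    (rootedCliqueFamily F U (s + 1)).WeaklyDependent q := by
  intro i hi
  set 𝒦 := rootedCliqueFamily F U (s + 1)
  obtain ⟨-, hiU, hicard, -⟩ := mem_index_rootedCliqueFamily.1 hi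
  have hqi : 0 ≤ q ^ #(𝒦.elems i) := pow_nonneg h.mem_Icc.1 _
  have hsum := h.sum_rootWeight_le (F := F) (A := i.2) fun v hv => hD v (hiU hv)
  rw [hicard] at hsum
  calc ∑ j ∈ 𝒦.conflicts i, q ^ #(𝒦.elems i ∪ 𝒦.elems j)
      = ∑ f ∈ F, ∑ T ∈ powersetCard (s + 1) U with (f, T) ∈ 𝒦.conflicts i,
          q ^ #(𝒦.elems i ∪ 𝒦.elems (f, T)) := by
        refine sum_finset_product _ _
          (fun f => {T ∈ powersetCard (s + 1) U | (f, T) ∈ 𝒦.conflicts i}) fun j =>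
            ⟨fun hj => ?_, fun hj => (mem_filter.1 hj.2).2⟩
        obtain ⟨hjF, hjU, hjcard, -⟩ :=
          mem_index_rootedCliqueFamily.1 (CopyFamily.mem_conflicts.1 hj).1
        exact ⟨hjF, mem_filter.2 ⟨mem_powersetCard.2 ⟨hjU, hjcard⟩, hj⟩⟩
    _ ≤ q ^ #(𝒦.elems i) *
          (2 ^ (s + 3) * ∑ f ∈ F, rootWeight (Fintype.card V) q c i.2 f) := by
        refine (sum_le_sum fun f _ => sum_conflicts_with_root_le h hi f).trans_eq ?_
        rw [← mul_sum, ← mul_sum, mul_left_comm]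
    _ ≤ q ^ #(𝒦.elems i) * (1 / 2) := by
        refine mul_le_mul_of_nonneg_left (le_trans ?_ hsmall) hqi
        exact mul_le_mul_of_nonneg_left hsum (by positivity)
    _ = q ^ #(𝒦.elems i) / 2 := by ring

end RootedCliques

/-! ### Building the clique packing -/

section CliquePacking

variable {V : Type*} {G H : SimpleGraph V} {r w g : ℕ}

/-- `𝒞` consists of pairwise vertex-disjoint copies of `K_r` in `G`. -/
def IsCliquePacking (G : SimpleGraph V) (r : ℕ) (𝒞 : Finset (Finset V)) : Prop :=
  (∀ c ∈ 𝒞, G.IsNClique r c) ∧ (𝒞 : Set (Finset V)).PairwiseDisjoint id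

/-- Every copy of `𝒦` present in the random edge set `S` spans a copy of `K_r` in `G ∪ S` with
vertices in `X`. -/
def YieldsCliques {ι : Type*} (𝒦 : CopyFamily ι (Sym2 V) V) (G : SimpleGraph V) (r : ℕ)
    (X : Finset V) : Prop :=
  ∀ S, ∀ i ∈ 𝒦.index, 𝒦.elems i ⊆ S →
    𝒦.verts i ⊆ X ∧ (G ⊔ graphOfEdges S).IsNClique r (𝒦.verts i)

lemma YieldsCliques.exists_isCliquePacking {ι : Type*} {𝒦 : CopyFamily ι (Sym2 V) V}
    {X : Finset V} {S : Finset (Sym2 V)} (h𝒦 : YieldsCliques 𝒦 G (r + 1) X)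
    (hg : g ≤ 𝒦.packingNumber S) :
    ∃ 𝒞, #𝒞 = g ∧ IsCliquePacking (G ⊔ graphOfEdges S) (r + 1) 𝒞 ∧ ∀ c ∈ 𝒞, c ⊆ X := by
  obtain ⟨J, hJ, hcard⟩ := 𝒦.exists_isPacking_card_eq S
  obtain ⟨J', hJ', hcard'⟩ := exists_subset_card_eq (hcard ▸ hg)
  obtain ⟨hindex, hpresent, hdisj⟩ := hJ.subset hJ' fun i hi => hJ.2.1 i (hJ' hi)
  have hclique i (hi : i ∈ J') := h𝒦 S i (hindex hi) (hpresent i hi)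
  have hinj : Set.InjOn 𝒦.verts J' := fun i hi j hj hij => by
    by_contra hne
    have hempty : 𝒦.verts i = ∅ := by
      simpa [Function.onFun, ← hij] using hdisj hi hj hne
    simpa [hempty] using (hclique i hi).2.card_eq
  refine ⟨J'.image 𝒦.verts, by rw [card_image_of_injOn hinj, hcard'],
    ⟨forall_mem_image.2 fun i hi => (hclique i hi).2, ?_⟩,
    forall_mem_image.2 fun i hi => (hclique i hi).1⟩
  rw [coe_image]
  exact hdisj.image

lemma IsCliquePacking.insert {𝒞 : Finset (Finset V)} {c : Finset V} (h𝒞 : IsCliquePacking G r 𝒞)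
    (hc : G.IsNClique r c) (hdisj : ∀ d ∈ 𝒞, Disjoint c d) :
    IsCliquePacking G r (insert c 𝒞) := by
  refine ⟨forall_mem_insert _ _ _ |>.2 ⟨hc, h𝒞.1⟩, ?_⟩
  rw [coe_insert]
  exact h𝒞.2.insert fun d hd _ => hdisj d hd

lemma yieldsCliques_cliqueFamily [DecidableEq V] (G : SimpleGraph V) (U : Finset V)
    (r : ℕ) : YieldsCliques (cliqueFamily U r) G r U := fun _ _ hT hS =>
  ⟨(mem_powersetCard.1 hT).1,
    (isNClique_graphOfEdges_iff.2 ⟨(mem_powersetCard.1 hT).2, hS⟩).mono le_sup_right⟩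

lemma yieldsCliques_rootedCliqueFamily [DecidableEq V] {F : Finset (Sym2 V)}
    (hF : ∀ f ∈ F, f ∈ G.edgeSet) (U : Finset V) (r : ℕ) :
    YieldsCliques (rootedCliqueFamily F U r) G r U := by
  intro S i hi hS
  obtain ⟨hroot, hU, hcard, -⟩ := mem_index_rootedCliqueFamily.1 hi
  have hsub : cliqueEdges i.2 ⊆ insert i.1 S := fun e he => by
    by_cases hei : e = i.1
    · exact mem_insert.2 (Or.inl hei)
    · exact mem_insert_of_mem (hS (mem_erase.2 ⟨hei, he⟩))
  have hle : graphOfEdges (insert i.1 S) ≤ G ⊔ graphOfEdges S := fun u v huv => by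
    obtain ⟨hmem, hne⟩ := (SimpleGraph.fromEdgeSet_adj _).1 huv
    rcases mem_insert.1 (mem_coe.1 hmem) with h | h
    · exact Or.inl (G.mem_edgeSet.1 (h ▸ hF _ hroot))
    · exact Or.inr ((SimpleGraph.fromEdgeSet_adj _).2 ⟨h, hne⟩)
  exact ⟨hU, (isNClique_graphOfEdges_iff.2 ⟨hcard, hsub⟩).mono hle⟩

variable [Fintype V]

lemma CliqueRich.exists_isNClique_insert (hH : CliqueRich H r w) {v : V} {X : Finset V}
    (hv : w + #X ≤ G.degree v) :
    ∃ T, Disjoint T X ∧ v ∉ T ∧ (G ⊔ H).IsNClique (r + 1) (insert v T) := by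
  have hW : w ≤ #(G.neighborFinset v \ X) := by
    have := le_card_sdiff X (G.neighborFinset v)
    rw [G.card_neighborFinset_eq_degree] at this
    lia
  obtain ⟨T, hTW, hT⟩ := hH _ hW
  have hadj u (hu : u ∈ T) : G.Adj v u := (G.mem_neighborFinset v u).1 (mem_sdiff.1 (hTW hu)).1
  exact ⟨T, disjoint_of_subset_left hTW sdiff_disjoint, fun h => (hadj v h).ne rfl,
    (hT.mono le_sup_right).insert fun u hu => Or.inl (hadj u hu)⟩

lemma CliqueRich.exists_isCliquePacking (hH : CliqueRich H r w) {L : Finset V}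
    {𝒞₀ : Finset (Finset V)} (h𝒞₀ : IsCliquePacking (G ⊔ H) (r + 1) 𝒞₀)
    (hdisj : ∀ c ∈ 𝒞₀, Disjoint c L) (hdeg : ∀ v ∈ L, w + (r + 2) * (#𝒞₀ + #L) ≤ G.degree v) :
    ∃ 𝒞, #𝒞 = #𝒞₀ + #L ∧ IsCliquePacking (G ⊔ H) (r + 1) 𝒞 := by
  induction L using Finset.induction_on generalizing 𝒞₀ with
  | empty => exact ⟨𝒞₀, by simp, h𝒞₀⟩
  | insert v L hvL ih =>
    have hused : #(𝒞₀.biUnion id) ≤ #𝒞₀ * (r + 1) :=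
      card_biUnion_le_card_mul _ _ _ fun c hc => (h𝒞₀.1 c hc).card_eq.le
    have hroom : w + #(L ∪ 𝒞₀.biUnion id) ≤ G.degree v := by
      have hv := hdeg v (mem_insert_self v L)
      have := card_union_le L (𝒞₀.biUnion id)
      rw [card_insert_of_notMem hvL] at hv
      nlinarith
    obtain ⟨T, hTX, hvT, hT⟩ := hH.exists_isNClique_insert hroom
    obtain ⟨hTL, hT𝒞₀⟩ := disjoint_union_right.1 hTX
    have hv𝒞₀ c (hc : c ∈ 𝒞₀) : v ∉ c := disjoint_right.1 (hdisj c hc) (mem_insert_self v L)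
    have hnew c (hc : c ∈ 𝒞₀) : Disjoint (insert v T) c :=
      disjoint_insert_left.2 ⟨hv𝒞₀ c hc, (disjoint_biUnion_right _ _ _).1 hT𝒞₀ c hc⟩
    have hcard : #(insert (insert v T) 𝒞₀) = #𝒞₀ + 1 :=
      card_insert_of_notMem fun h => hv𝒞₀ _ h (mem_insert_self v T)
    have hLdisj c (hc : c ∈ insert (insert v T) 𝒞₀) : Disjoint c L := by
      rcases mem_insert.1 hc with rfl | hc
      · exact disjoint_insert_left.2 ⟨hvL, hTL⟩
      · exact disjoint_of_subset_right (subset_insert v L) (hdisj c hc)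
    have hsum : #(insert (insert v T) 𝒞₀) + #L = #𝒞₀ + #(insert v L) := by
      rw [hcard, card_insert_of_notMem hvL]
      ring
    rw [← hsum] at hdeg ⊢
    exact ih (h𝒞₀.insert hT hnew) hLdisj fun u hu => hdeg u (mem_insert_of_mem hu)

variable [DecidableEq V]

lemma binomProb_not_exists_isCliquePacking_le {ι : Type*} {𝒦 : CopyFamily ι (Sym2 V) V} {p : ℝ}
    (hp : p ∈ Set.Icc (0 : ℝ) 1) {L : Finset V}
    (hL : ∀ v ∈ L, w + (r + 2) * (g + #L) ≤ G.degree v)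
    (h𝒦 : YieldsCliques 𝒦 G (r + 1) Lᶜ) (A : Finset (Sym2 V)) :
    binomProb p A (fun S => ¬ ∃ 𝒞, #𝒞 = g + #L ∧
        IsCliquePacking (G ⊔ graphOfEdges S) (r + 1) 𝒞) ≤
      binomProb p A (fun S => ¬ CliqueRich (graphOfEdges S) r w) +
        binomProb p A (fun S => 𝒦.packingNumber S < g) := by
  refine (binomProb_mono hp fun S _ hfail => ?_).trans (binomProb_or_le hp)
  by_contra! hgood
  obtain ⟨hrich, hpack⟩ := hgood
  obtain ⟨𝒞₀, hcard, h𝒞₀, hsub⟩ := h𝒦.exists_isCliquePacking hpack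
  refine hfail ?_
  rw [← hcard] at hL ⊢
  exact hrich.exists_isCliquePacking h𝒞₀
    (fun c hc => disjoint_of_subset_left (hsub c hc) disjoint_compl_left) hL

end CliquePacking

section RootSets

variable {V : Type*} [DecidableEq V] {G : SimpleGraph V} {F : Finset (Sym2 V)} {U : Finset V}

lemma sum_card_filter_mem (hF : F ⊆ cliqueEdges U) : ∑ v ∈ U, #{f ∈ F | v ∈ f} = 2 * #F := by
  have hends f (hf : f ∈ F) : #{v ∈ U | v ∈ f} = 2 := by
    obtain ⟨hfU, hdiag⟩ := mem_cliqueEdges.1 (hF hf)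
    rw [← Sym2.card_toFinset_of_not_isDiag f hdiag]
    congr 1
    ext v
    simpa using hfU v
  calc ∑ v ∈ U, #{f ∈ F | v ∈ f} = ∑ f ∈ F, #{v ∈ U | v ∈ f} :=
        sum_card_bipartiteAbove_eq_sum_card_bipartiteBelow fun v f => v ∈ f
    _ = 2 * #F := by rw [sum_congr rfl hends, sum_const, smul_eq_mul, mul_comm]

variable [Fintype V]

/-- `F` is a set of edges suitable as roots of the cliques of `rootedCliqueFamily`: the graph on `U`
with edge set `F` has minimum degree at least `g` and maximum degree at most `η * |V|`, and `U`
contains half of the vertices. -/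
structure IsRootSet (F : Finset (Sym2 V)) (U : Finset V) (η : ℝ) (g : ℕ) : Prop where
  subset : F ⊆ cliqueEdges U
  card_le : Fintype.card V ≤ 2 * #U
  le_degree : ∀ v ∈ U, g ≤ #{f ∈ F | v ∈ f}
  degree_le : ∀ v ∈ U, (#{f ∈ F | v ∈ f} : ℝ) ≤ η * Fintype.card V

namespace IsRootSet

variable {η : ℝ} {g : ℕ}

lemma card_mul_le (h : IsRootSet F U η g) : Fintype.card V * g ≤ 4 * #F := by
  have hsum := card_nsmul_le_sum U _ g h.le_degree
  rw [sum_card_filter_mem h.subset, smul_eq_mul] at hsum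
  have := h.card_le
  nlinarith

lemma card_le_mul_sq (h : IsRootSet F U η g) (hη : 0 ≤ η) :
    (#F : ℝ) ≤ η * (Fintype.card V : ℝ) ^ 2 := by
  have hsum := sum_le_card_nsmul U _ _ h.degree_le
  rw [← Nat.cast_sum, sum_card_filter_mem h.subset, nsmul_eq_mul] at hsum
  have hU : (#U : ℝ) ≤ Fintype.card V := by exact_mod_cast card_le_univ U
  calc (#F : ℝ) ≤ ((2 * #F : ℕ) : ℝ) := by exact_mod_cast Nat.le_mul_of_pos_left _ two_pos
    _ ≤ Fintype.card V * (η * Fintype.card V) := hsum.trans (by gcongr)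
    _ = η * (Fintype.card V : ℝ) ^ 2 := by ring

end IsRootSet

lemma card_filter_mem_le_degree (hF : ∀ f ∈ F, f ∈ G.edgeSet) (v : V) :
    #{f ∈ F | v ∈ f} ≤ G.degree v := by
  rw [← G.card_incidenceFinset_eq_degree]
  refine card_le_card fun e he => ?_
  obtain ⟨heF, hve⟩ := mem_filter.1 he
  exact (G.mem_incidenceFinset v e).2 ⟨hF e heF, hve⟩

lemma degree_sub_card_le_card_filter_mem {L : Finset V} {v : V} (hv : v ∉ L) :
    G.degree v - #L ≤ #{f ∈ G.edgeFinset ∩ cliqueEdges Lᶜ | v ∈ f} := by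
  calc G.degree v - #L ≤ #(G.neighborFinset v \ L) := by
        rw [← G.card_neighborFinset_eq_degree]
        exact le_card_sdiff L _
    _ = #((G.neighborFinset v \ L).image fun u => s(v, u)) :=
        (card_image_of_injective _ (Sym2.mkEmbedding v).injective).symm
    _ ≤ _ := card_le_card <| image_subset_iff.2 fun u hu => by
        obtain ⟨hvu, huL⟩ := mem_sdiff.1 hu
        have hadj := (G.mem_neighborFinset v u).1 hvu
        have hne : ¬ s(v, u).IsDiag := by simpa using hadj.ne
        simp_all [mem_cliqueEdges]

lemma isRootSet_edgeFinset_inter {L : Finset V} {η : ℝ} {g : ℕ}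
    (hcard : Fintype.card V ≤ 2 * #Lᶜ) (hmin : ∀ v, g + #L ≤ G.degree v)
    (hmax : ∀ v ∉ L, (G.degree v : ℝ) ≤ η * Fintype.card V) :
    IsRootSet (G.edgeFinset ∩ cliqueEdges Lᶜ) Lᶜ η g where
  subset := inter_subset_right
  card_le := hcard
  le_degree v hv := by
    have := hmin v
    exact (by lia : g ≤ G.degree v - #L).trans
      (degree_sub_card_le_card_filter_mem (mem_compl.1 hv))
  degree_le v hv :=
    (Nat.cast_le.2 (card_filter_mem_le_degree
      (fun _ hf => SimpleGraph.mem_edgeFinset.1 (mem_inter.1 hf).1) v)).trans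
      (hmax v (mem_compl.1 hv))

lemma binomProb_not_exists_isCliquePacking_le_of_le_degree {A : Finset (Sym2 V)} {p η δ : ℝ}
    {s w g g₀ : ℕ} (hp : p ∈ Set.Icc (0 : ℝ) 1) (hη : η ≤ 1) (hg₀ : 0 < g₀)
    (hwg : (w : ℝ) + (s + 2) * g ≤ η * Fintype.card V) (hG : ∀ v, g ≤ G.degree v)
    (hrich : binomProb p A (fun S => ¬ CliqueRich (graphOfEdges S) s w) ≤ δ / 2)
    (hfew : ∀ U : Finset V, Fintype.card V ≤ 2 * #U →
      binomProb p A (fun S => (cliqueFamily U (s + 1)).packingNumber S < g₀) ≤ δ / 2)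
    (hmany : ∀ (F : Finset (Sym2 V)) (U : Finset V) (g' : ℕ), IsRootSet F U η g' → g₀ ≤ g' →
      binomProb p A (fun S => (rootedCliqueFamily F U (s + 1)).packingNumber S < g') ≤ δ / 2) :
    binomProb p A (fun S => ¬ ∃ 𝒞, #𝒞 = g ∧
      IsCliquePacking (G ⊔ graphOfEdges S) (s + 1) 𝒞) ≤ δ := by
  obtain ⟨L, hLsub, hLcard⟩ := exists_subset_card_eq
    (min_le_left #{v | w + (s + 2) * g ≤ G.degree v} g)
  obtain ⟨g', rfl⟩ : ∃ g', g = g' + #L := ⟨g - #L, by lia⟩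
  have hL v (hv : v ∈ L) := (mem_filter.1 (hLsub hv)).2
  have hhalf : Fintype.card V ≤ 2 * #Lᶜ := by
    have : (0 : ℝ) ≤ Fintype.card V := Nat.cast_nonneg _
    have : 2 * ((g' + #L : ℕ) : ℝ) ≤ Fintype.card V := by nlinarith
    have : 2 * (g' + #L) ≤ Fintype.card V := by exact_mod_cast this
    rw [card_compl]
    lia
  rcases lt_or_ge g' g₀ with hlt | hge
  · have := binomProb_not_exists_isCliquePacking_le hp hL
      (yieldsCliques_cliqueFamily G Lᶜ (s + 1)) A
    have : binomProb p A (fun S => (cliqueFamily Lᶜ (s + 1)).packingNumber S < g') ≤ δ / 2 :=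
      (binomProb_mono hp fun S _ h => h.trans hlt).trans (hfew Lᶜ hhalf)
    linarith
  · have hLeq := eq_of_subset_of_card_le hLsub (by lia)
    have hmax v (hv : v ∉ L) : (G.degree v : ℝ) ≤ η * Fintype.card V := by
      rw [hLeq, mem_filter_univ, not_le] at hv
      exact le_trans (by exact_mod_cast hv.le) hwg
    have hroot := isRootSet_edgeFinset_inter hhalf hG hmax
    have hedges f (hf : f ∈ G.edgeFinset ∩ cliqueEdges Lᶜ) : f ∈ G.edgeSet :=
      SimpleGraph.mem_edgeFinset.1 (mem_inter.1 hf).1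
    have := binomProb_not_exists_isCliquePacking_le hp hL
      (yieldsCliques_rootedCliqueFamily hedges Lᶜ (s + 1)) A
    have := hmany _ _ _ hroot hge
    linarith

end RootSets

section RootedPacking

variable {V : Type*} [Fintype V] [DecidableEq V] {F : Finset (Sym2 V)} {U : Finset V}
  {q c η : ℝ} {s g : ℕ}

namespace IsRootSet

lemma weaklyDependent (h : IsRootSet F U η g) (hη : 0 ≤ η)
    (hq : IsCliqueBalanced (Fintype.card V) q c s)
    (hsmall : 2 ^ (s + 3) * ((s + 2) * η * c + (s + 1).choose 2 * (c * q)) ≤ 1 / 2) :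
    (rootedCliqueFamily F U (s + 1)).WeaklyDependent q := by
  refine weaklyDependent_rootedCliqueFamily hq h.degree_le (le_trans ?_ hsmall)
  have hN := hq.pos
  have hc : 0 ≤ c := zero_le_one.trans hq.one_le
  have hroots : #F * (c / (Fintype.card V : ℝ) ^ 2) ≤ η * c := by
    calc #F * (c / (Fintype.card V : ℝ) ^ 2)
        ≤ η * (Fintype.card V : ℝ) ^ 2 * (c / (Fintype.card V : ℝ) ^ 2) := by
          gcongr
          exact h.card_le_mul_sq hη
      _ = η * c := by field_simp
  have hdegree : ((s + 1 : ℕ) : ℝ) * (η * Fintype.card V) * (c / Fintype.card V) =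
      (s + 1) * η * c := by
    push_cast
    field_simp
  rw [hdegree]
  gcongr
  linarith

lemma four_mul_le_expectedCount (h : IsRootSet F U η g) (hq : 0 ≤ q)
    (hs : 1 ≤ s)
    (hcount : 16 ≤ Fintype.card V * ((#U - 2).choose (s - 1) * q ^ ((s + 1).choose 2 - 1))) :
    4 * (g : ℝ) ≤ (rootedCliqueFamily F U (s + 1)).expectedCount q := by
  have hexpected := mul_pow_le_expectedCount_rootedCliqueFamily h.subset hq (s - 1)
  rw [show s - 1 + 2 = s + 1 by lia] at hexpected
  have hF : (Fintype.card V : ℝ) * g ≤ 4 * #F := by exact_mod_cast h.card_mul_le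
  set X : ℝ := (#U - 2).choose (s - 1) * q ^ ((s + 1).choose 2 - 1)
  have : 0 ≤ X := by positivity
  calc 4 * (g : ℝ) = 16 * g / 4 := by ring
    _ ≤ Fintype.card V * X * g / 4 := by gcongr
    _ = Fintype.card V * g * X / 4 := by ring
    _ ≤ 4 * #F * X / 4 := by gcongr
    _ = #F * (#U - 2).choose (s - 1) * q ^ ((s + 1).choose 2 - 1) := by
        simp only [X]
        ring
    _ ≤ _ := hexpected

lemma binomProb_packingNumber_lt_le (h : IsRootSet F U η g) (hη : 0 ≤ η) (hs : 1 ≤ s) (hg : 0 < g)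
    (hq : IsCliqueBalanced (Fintype.card V) q c s)
    (hsmall : 2 ^ (s + 3) * ((s + 2) * η * c + (s + 1).choose 2 * (c * q)) ≤ 1 / 2)
    (hcount : 16 ≤ Fintype.card V * ((#U - 2).choose (s - 1) * q ^ ((s + 1).choose 2 - 1))) :
    binomProb q (cliqueEdges univ)
        (fun S => (rootedCliqueFamily F U (s + 1)).packingNumber S < g) ≤
      2 * (s + 1).choose 2 / g := by
  have hexpected := h.four_mul_le_expectedCount hq.mem_Icc.1 hs hcount
  have : (0 : ℝ) < g := by exact_mod_cast hg
  refine (CopyFamily.binomProb_packingNumber_lt_le (K := (s + 1).choose 2) hq.mem_Icc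
    (fun i _ => (erase_subset _ _).trans (cliqueEdges_mono (subset_univ _)))
    (fun i hi => (card_elems_rootedCliqueFamily hi).trans_le (Nat.sub_le _ _))
    (h.weaklyDependent hη hq hsmall) hexpected).trans ?_
  calc 8 * ((s + 1).choose 2 : ℝ) / (rootedCliqueFamily F U (s + 1)).expectedCount q
      ≤ 8 * (s + 1).choose 2 / (4 * g) := by gcongr
    _ = 2 * (s + 1).choose 2 / g := by
        field_simp
        ring

end IsRootSet

end RootedPacking

/-! ### Asymptotics -/

section Asymptotics

open Filter Topology

/-- The exponent `φ(s)` of the threshold `p_s(n)`. -/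
noncomputable def cliqueExponent (s : ℕ) : ℝ := 2 * s / ((s - 1) * (s + 2))

/-- The edge probability `p n` lies between the thresholds for the appearance of `K_{s+1}` and of
`K_{s+2}` in `G_{n,p}`. -/
structure IsCliqueWindow (s : ℕ) (p : ℕ → ℝ) : Prop where
  nonneg : ∀ n, 0 ≤ p n
  sq_mul_pow_tendsto : Tendsto (fun n : ℕ => (n : ℝ) ^ 2 * p n ^ s) atTop atTop
  sq_mul_pow_succ_tendsto : Tendsto (fun n : ℕ => (n : ℝ) ^ 2 * p n ^ (s + 1)) atTop (𝓝 0)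

section Exponent

variable {s : ℕ}

lemma cliqueExponent_two : cliqueExponent 2 = 1 := by norm_num [cliqueExponent]

lemma cliqueExponent_pos (hs : 2 ≤ s) : 0 < cliqueExponent s := by
  have : (2 : ℝ) ≤ s := by exact_mod_cast hs
  have : 0 < (s : ℝ) - 1 := by linarith
  rw [cliqueExponent]
  positivity

lemma cliqueExponent_mul_lt_two (hs : 3 ≤ s) : cliqueExponent s * s < 2 := by
  have : (3 : ℝ) ≤ s := by exact_mod_cast hs
  have : 0 < (s : ℝ) - 1 := by linarith
  rw [cliqueExponent, div_mul_eq_mul_div, div_lt_iff₀ (by positivity)]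
  nlinarith

lemma cliqueExponent_mul_le_two (hs : 2 ≤ s) : cliqueExponent s * s ≤ 2 := by
  obtain rfl | hs := hs.eq_or_lt
  · norm_num [cliqueExponent_two]
  · exact (cliqueExponent_mul_lt_two hs).le

lemma two_lt_cliqueExponent_mul (hs : 2 ≤ s) : 2 < cliqueExponent s * (s + 1) := by
  have : (2 : ℝ) ≤ s := by exact_mod_cast hs
  have : 0 < (s : ℝ) - 1 := by linarith
  rw [cliqueExponent, div_mul_eq_mul_div, lt_div_iff₀ (by positivity)]
  nlinarith

lemma cliqueExponent_mul_choose_sub_one (hs : 2 ≤ s) :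
    cliqueExponent s * ((s + 1).choose 2 - 1 : ℕ) = s := by
  have : (2 : ℝ) ≤ s := by exact_mod_cast hs
  have : (s : ℝ) - 1 ≠ 0 := by linarith
  rw [Nat.cast_sub (Nat.choose_pos (by lia)), Nat.cast_choose_two, cliqueExponent]
  push_cast
  field_simp
  ring

end Exponent

lemma two_mul_choose_two (r : ℕ) : 2 * r.choose 2 = r * (r - 1) := by
  rw [Nat.choose_two_right, Nat.mul_div_cancel' (Nat.even_mul_pred_self r).two_dvd]

lemma natCast_pow_mul_rpow_neg_pow {n : ℕ} (hn : n ≠ 0) (a : ℝ) (j k : ℕ) :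
    (n : ℝ) ^ j * ((n : ℝ) ^ (-a)) ^ k = (n : ℝ) ^ (j - a * k) := by
  have : (0 : ℝ) < n := by exact_mod_cast Nat.pos_of_ne_zero hn
  rw [← Real.rpow_mul_natCast this.le, ← Real.rpow_natCast, ← Real.rpow_add this, neg_mul,
    sub_eq_add_neg]

section Threshold

variable {s n : ℕ}

lemma pThr_two (n : ℕ) : pThr 2 n = Real.log n / n := if_pos rfl

lemma pThr_of_ne_two (hs : s ≠ 2) (n : ℕ) : pThr s n = (n : ℝ) ^ (-cliqueExponent s) := by
  rw [pThr, if_neg hs, cliqueExponent, neg_div]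

lemma pThr_nonneg (s n : ℕ) : 0 ≤ pThr s n := by
  by_cases hs : s = 2
  · rw [hs, pThr_two]
    exact div_nonneg (Real.log_natCast_nonneg n) n.cast_nonneg
  · rw [pThr_of_ne_two hs]
    positivity

lemma rpow_neg_cliqueExponent_le_pThr (hn : 3 ≤ n) : (n : ℝ) ^ (-cliqueExponent s) ≤ pThr s n := by
  by_cases hs : s = 2
  · have h3 : (3 : ℝ) ≤ n := by exact_mod_cast hn
    have hlog : 1 ≤ Real.log n := by
      rw [Real.le_log_iff_exp_le (by linarith)]
      linarith [Real.exp_one_lt_three]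
    rw [hs, pThr_two, cliqueExponent_two, Real.rpow_neg_one, ← one_div]
    gcongr
  · rw [pThr_of_ne_two hs]

lemma tendsto_sq_mul_pThr_pow (hs : 2 ≤ s) :
    Tendsto (fun n : ℕ => (n : ℝ) ^ 2 * pThr s n ^ s) atTop atTop := by
  obtain rfl | hs := hs.eq_or_lt
  · have hlog : Tendsto (fun n : ℕ => Real.log n ^ 2) atTop atTop :=
      (tendsto_pow_atTop two_ne_zero).comp
        (Real.tendsto_log_atTop.comp tendsto_natCast_atTop_atTop)
    refine hlog.congr' ?_
    filter_upwards [eventually_ne_atTop 0] with n hn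
    rw [pThr_two]
    field_simp
  · have hexp : 0 < ((2 : ℕ) : ℝ) - cliqueExponent s * s := by
      linarith [cliqueExponent_mul_lt_two hs, (Nat.cast_two : ((2 : ℕ) : ℝ) = 2)]
    refine ((tendsto_rpow_atTop hexp).comp tendsto_natCast_atTop_atTop).congr' ?_
    filter_upwards [eventually_ne_atTop 0] with n hn
    rw [pThr_of_ne_two hs.ne', natCast_pow_mul_rpow_neg_pow hn, Function.comp_apply]

lemma tendsto_sq_mul_pThr_pow_succ (hs : 2 ≤ s) :
    Tendsto (fun n : ℕ => (n : ℝ) ^ 2 * pThr s n ^ (s + 1)) atTop (𝓝 0) := by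
  obtain rfl | hs' := hs.eq_or_lt
  · have hlog : Tendsto (fun n : ℕ => Real.log n ^ 3 / n) atTop (𝓝 0) :=
      Real.isLittleO_pow_log_id_atTop.tendsto_div_nhds_zero.comp tendsto_natCast_atTop_atTop
    refine hlog.congr' ?_
    filter_upwards [eventually_ne_atTop 0] with n hn
    rw [pThr_two, div_pow]
    field_simp
    ring
  · have hexp : 0 < cliqueExponent s * (s + 1) - 2 := by linarith [two_lt_cliqueExponent_mul hs]
    refine ((tendsto_rpow_neg_atTop hexp).comp tendsto_natCast_atTop_atTop).congr' ?_
    filter_upwards [eventually_ne_atTop 0] with n hn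
    rw [pThr_of_ne_two hs'.ne', natCast_pow_mul_rpow_neg_pow hn, Function.comp_apply]
    push_cast
    ring_nf

lemma isCliqueWindow_const_mul_pThr (hs : 2 ≤ s) {C : ℝ} (hC : 0 < C) :
    IsCliqueWindow s (fun n => C * pThr s n) where
  nonneg n := mul_nonneg hC.le (pThr_nonneg s n)
  sq_mul_pow_tendsto := by
    simp only [mul_pow, mul_left_comm _ (C ^ s)]
    exact (tendsto_sq_mul_pThr_pow hs).const_mul_atTop (pow_pos hC s)
  sq_mul_pow_succ_tendsto := by
    simp only [mul_pow, mul_left_comm _ (C ^ (s + 1))]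
    simpa using (tendsto_sq_mul_pThr_pow_succ hs).const_mul (C ^ (s + 1))

end Threshold

lemma eventually_mul_pow_le_choose {η : ℝ} (hη : 0 < η) (a : ℝ) (k : ℕ) :
    ∀ᶠ n : ℕ in atTop, ∀ u : ℕ, η * n ≤ u + a →
      (η / 2) ^ k / k.factorial * (n : ℝ) ^ k ≤ u.choose k := by
  have hlarge := (tendsto_natCast_atTop_atTop (R := ℝ)).const_mul_atTop (half_pos hη)
  filter_upwards [hlarge.eventually_ge_atTop (a + k)] with n hn u hu
  have hsub : η / 2 * n ≤ ((u + 1 - k : ℕ) : ℝ) := by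
    have : ((u + 1 : ℕ) : ℝ) ≤ ((u + 1 - k : ℕ) : ℝ) + k := by exact_mod_cast le_tsub_add
    push_cast at this
    linarith
  calc (η / 2) ^ k / k.factorial * (n : ℝ) ^ k = (η / 2 * n) ^ k / k.factorial := by ring
    _ ≤ ((u + 1 - k : ℕ) : ℝ) ^ k / k.factorial := by gcongr
    _ ≤ u.choose k := Nat.pow_le_choose k u

namespace IsCliqueWindow

variable {s : ℕ} {p : ℕ → ℝ}

lemma eventually_mem_Icc (h : IsCliqueWindow s p) : ∀ᶠ n in atTop, p n ∈ Set.Icc (0 : ℝ) 1 := by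
  filter_upwards [h.sq_mul_pow_succ_tendsto.eventually_le_const one_pos,
    eventually_ge_atTop 1] with n hn hn1
  refine ⟨h.nonneg n, (pow_le_one_iff_of_nonneg (h.nonneg n) s.succ_ne_zero).1 (le_trans ?_ hn)⟩
  have : (1 : ℝ) ≤ n := by exact_mod_cast hn1
  exact le_mul_of_one_le_left (pow_nonneg (h.nonneg n) _) (one_le_pow₀ this)

lemma tendsto_pow_mul_pow (h : IsCliqueWindow s p) {k e : ℕ} (hk : k ≠ 0) (he : 2 * e = s * k) :
    Tendsto (fun n : ℕ => (n : ℝ) ^ k * p n ^ e) atTop atTop := by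
  refine tendsto_atTop.2 fun M => ?_
  filter_upwards [h.sq_mul_pow_tendsto.eventually_ge_atTop (max 1 M ^ 2)] with n hn
  exact (le_max_right 1 M).trans
    (le_pow_mul_pow n.cast_nonneg (h.nonneg n) (le_max_left 1 M) hk hn he)

lemma eventually_four_mul_le_choose_mul_pow (h : IsCliqueWindow s p) (hs : 2 ≤ s) {η : ℝ}
    (hη : 0 < η) :
    ∀ᶠ n : ℕ in atTop, 4 * (n : ℝ) ≤ (⌊η * n⌋₊.choose s : ℝ) * p n ^ s.choose 2 := by
  have hlarge := (h.tendsto_pow_mul_pow (by lia) (two_mul_choose_two s)).const_mul_atTop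
    (by positivity : 0 < (η / 2) ^ s / s.factorial)
  filter_upwards [hlarge.eventually_ge_atTop 4,
    eventually_mul_pow_le_choose hη 1 s] with n hn hchoose
  have hp := h.nonneg n
  calc 4 * (n : ℝ)
      ≤ (η / 2) ^ s / s.factorial * ((n : ℝ) ^ (s - 1) * p n ^ s.choose 2) * n := by gcongr
    _ = (η / 2) ^ s / s.factorial * ((n : ℝ) ^ (s - 1) * n) * p n ^ s.choose 2 := by ring
    _ = (η / 2) ^ s / s.factorial * (n : ℝ) ^ s * p n ^ s.choose 2 := by
        rw [← pow_succ, Nat.sub_add_cancel (by lia)]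
    _ ≤ (⌊η * n⌋₊.choose s : ℝ) * p n ^ s.choose 2 := by
        gcongr
        exact hchoose _ (Nat.lt_floor_add_one _).le

lemma eventually_le_choose_mul_pow (h : IsCliqueWindow s p) (B : ℝ) :
    ∀ᶠ n : ℕ in atTop, ∀ u : ℕ, n ≤ 2 * u →
      B ≤ (u.choose (s + 1) : ℝ) * p n ^ (s + 1).choose 2 := by
  have hedges : 2 * (s + 1).choose 2 = s * (s + 1) := by
    rw [two_mul_choose_two, Nat.add_sub_cancel, mul_comm]
  have hlarge := (h.tendsto_pow_mul_pow s.succ_ne_zero hedges).const_mul_atTop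
    (by positivity : (0 : ℝ) < (1 / 2 / 2) ^ (s + 1) / (s + 1).factorial)
  filter_upwards [hlarge.eventually_ge_atTop B,
    eventually_mul_pow_le_choose one_half_pos 0 (s + 1)] with n hn hchoose u hu
  have hp := h.nonneg n
  have hu' : (n : ℝ) ≤ 2 * u := by exact_mod_cast hu
  refine hn.trans ?_
  rw [← mul_assoc]
  gcongr
  exact hchoose u (by linarith)

lemma eventually_binomProb_not_cliqueRich_le (h : IsCliqueWindow s p) (hs : 2 ≤ s) {η δ : ℝ}
    (hη : 0 < η) (hδ : 0 < δ) :
    ∀ᶠ n : ℕ in atTop, binomProb (p n) (cliqueEdges (univ : Finset (Fin n)))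
      (fun S => ¬ CliqueRich (graphOfEdges S) s ⌊η * n⌋₊) ≤ δ := by
  have hexp : Tendsto (fun n : ℕ => Real.exp (-n)) atTop (𝓝 0) :=
    Real.tendsto_exp_neg_atTop_nhds_zero.comp tendsto_natCast_atTop_atTop
  filter_upwards [h.eventually_mem_Icc, eventually_ne_atTop 0, hexp.eventually_le_const hδ,
    h.sq_mul_pow_succ_tendsto.eventually_le_const (by positivity : (0 : ℝ) < (1 / 2 ^ (s + 1)) ^ 2),
    h.eventually_four_mul_le_choose_mul_pow hs hη] with n hp hn hexp hsmall hcount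
  have : NeZero n := ⟨hn⟩
  refine (binomProb_not_cliqueRich_le hp ?_ ?_).trans ?_ <;> rwa [Fintype.card_fin]

lemma eventually_binomProb_packingNumber_cliqueFamily_lt_le (h : IsCliqueWindow s p) (g : ℕ)
    {δ : ℝ} (hδ : 0 < δ) :
    ∀ᶠ n : ℕ in atTop, ∀ U : Finset (Fin n), n ≤ 2 * #U →
      binomProb (p n) (cliqueEdges univ)
        (fun S => (cliqueFamily U (s + 1)).packingNumber S < g) ≤ δ := by
  filter_upwards [h.eventually_mem_Icc, eventually_ne_atTop 0,
    h.sq_mul_pow_succ_tendsto.eventually_le_const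
      (by positivity : (0 : ℝ) < (1 / 2 ^ (s + 1 + 1)) ^ 2),
    h.eventually_le_choose_mul_pow (4 * g + 1),
    h.eventually_le_choose_mul_pow (8 * (s + 1).choose 2 / δ)]
    with n hp hn hsmall hcount hδcount U hU
  have : NeZero n := ⟨hn⟩
  have hg := hcount #U hU
  have hpos : (0 : ℝ) < (#U).choose (s + 1) * p n ^ (s + 1).choose 2 :=
    lt_of_lt_of_le (by positivity) hg
  refine (binomProb_packingNumber_cliqueFamily_lt_le hp (by rwa [Fintype.card_fin])
    (by linarith)).trans ?_
  rw [div_le_comm₀ hpos hδ]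
  exact hδcount #U hU

end IsCliqueWindow

section Balanced

variable {s : ℕ} {C : ℝ}

lemma tendsto_const_mul_rpow_neg_cliqueExponent (hs : 2 ≤ s) (C : ℝ) :
    Tendsto (fun n : ℕ => C * (n : ℝ) ^ (-cliqueExponent s)) atTop (𝓝 0) := by
  simpa using ((tendsto_rpow_neg_atTop (cliqueExponent_pos hs)).comp
    tendsto_natCast_atTop_atTop).const_mul C

lemma pow_mul_const_mul_rpow_neg_cliqueExponent_pow (hs : 2 ≤ s) (C : ℝ) {n : ℕ} (hn : n ≠ 0) :
    (n : ℝ) ^ s * (C * (n : ℝ) ^ (-cliqueExponent s)) ^ ((s + 1).choose 2 - 1) =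
      C ^ ((s + 1).choose 2 - 1) := by
  rw [mul_pow, mul_left_comm, natCast_pow_mul_rpow_neg_pow hn,
    cliqueExponent_mul_choose_sub_one hs, sub_self, Real.rpow_zero, mul_one]

lemma one_le_sq_mul_const_mul_rpow_neg_cliqueExponent_pow (hs : 2 ≤ s) (hC : 1 ≤ C) {n : ℕ}
    (hn : n ≠ 0) : 1 ≤ (n : ℝ) ^ 2 * (C * (n : ℝ) ^ (-cliqueExponent s)) ^ s := by
  have hn1 : (1 : ℝ) ≤ n := by exact_mod_cast Nat.one_le_iff_ne_zero.2 hn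
  rw [mul_pow, mul_left_comm, natCast_pow_mul_rpow_neg_pow hn]
  refine one_le_mul_of_one_le_of_one_le (one_le_pow₀ hC) (Real.one_le_rpow hn1 ?_)
  linarith [cliqueExponent_mul_le_two hs, (Nat.cast_two : ((2 : ℕ) : ℝ) = 2)]

lemma eventually_isCliqueBalanced (hs : 2 ≤ s) (hC : 1 ≤ C) :
    ∀ᶠ n : ℕ in atTop, IsCliqueBalanced n (C * (n : ℝ) ^ (-cliqueExponent s))
      (C ^ ((s + 1).choose 2 - 1)) s := by
  filter_upwards [eventually_ne_atTop 0,
    (tendsto_const_mul_rpow_neg_cliqueExponent hs C).eventually_le_const one_pos] with n hn hq1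
  have hq0 : 0 ≤ C * (n : ℝ) ^ (-cliqueExponent s) := by positivity
  refine ⟨by positivity, ⟨hq0, hq1⟩, one_le_pow₀ hC,
    (pow_mul_const_mul_rpow_neg_cliqueExponent_pow hs C hn).le, fun t ht hts => ?_⟩
  obtain rfl | ht := ht.eq_or_lt
  · simp
  refine le_pow_mul_pow n.cast_nonneg hq0 le_rfl (by lia : t - 1 ≠ 0) ?_ (two_mul_choose_two t)
  calc (1 : ℝ) ^ 2 ≤ (n : ℝ) ^ 2 * (C * (n : ℝ) ^ (-cliqueExponent s)) ^ s := by
        rw [one_pow]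
        exact one_le_sq_mul_const_mul_rpow_neg_cliqueExponent_pow hs hC hn
    _ ≤ (n : ℝ) ^ 2 * (C * (n : ℝ) ^ (-cliqueExponent s)) ^ t :=
        mul_le_mul_of_nonneg_left (pow_le_pow_of_le_one hq0 hq1 hts) (by positivity)

lemma eventually_le_mul_choose_mul_pow (hs : 2 ≤ s) (hC : 0 ≤ C) :
    ∀ᶠ n : ℕ in atTop, ∀ u : ℕ, n ≤ 2 * u →
      (1 / 4) ^ (s - 1) / (s - 1).factorial * C ^ ((s + 1).choose 2 - 1) ≤
        n * ((u - 2).choose (s - 1) *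
          (C * (n : ℝ) ^ (-cliqueExponent s)) ^ ((s + 1).choose 2 - 1)) := by
  filter_upwards [eventually_ne_atTop 0,
    eventually_mul_pow_le_choose one_half_pos 2 (s - 1)] with n hn hchoose u hu
  have hu2 : 1 / 2 * (n : ℝ) ≤ (u - 2 : ℕ) + 2 := by
    have : (n : ℝ) ≤ 2 * ((u - 2 : ℕ) + 2) := by exact_mod_cast (by lia : n ≤ 2 * (u - 2 + 2))
    linarith
  set X : ℝ := (C * (n : ℝ) ^ (-cliqueExponent s)) ^ ((s + 1).choose 2 - 1)
  have : 0 ≤ X := by positivity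
  calc (1 / 4) ^ (s - 1) / (s - 1).factorial * C ^ ((s + 1).choose 2 - 1)
      = (1 / 4) ^ (s - 1) / (s - 1).factorial * ((n : ℝ) ^ s * X) := by
        rw [pow_mul_const_mul_rpow_neg_cliqueExponent_pow hs C hn]
    _ = n * ((1 / 2 / 2) ^ (s - 1) / (s - 1).factorial * (n : ℝ) ^ (s - 1) * X) := by
        rw [← pow_sub_one_mul (by lia : s ≠ 0) (n : ℝ)]
        ring
    _ ≤ n * ((u - 2).choose (s - 1) * X) := by
        gcongr
        exact hchoose _ hu2

lemma exists_one_le_and_le_mul_pow {κ : ℝ} (hκ : 0 < κ) (a : ℝ) {e : ℕ} (he : e ≠ 0) :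
    ∃ C : ℝ, 1 ≤ C ∧ a ≤ κ * C ^ e :=
  ((eventually_ge_atTop 1).and
    (((tendsto_pow_atTop he).const_mul_atTop hκ).eventually_ge_atTop a)).exists

lemma eventually_binomProb_packingNumber_rootedCliqueFamily_lt_le (hs : 2 ≤ s) (hC : 1 ≤ C)
    (hlarge : 16 ≤ (1 / 4) ^ (s - 1) / (s - 1).factorial * C ^ ((s + 1).choose 2 - 1)) {η : ℝ}
    (hη : 0 ≤ η) (hsmall : 2 ^ (s + 3) * ((s + 2) * C ^ ((s + 1).choose 2 - 1)) * η < 1 / 2) :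
    ∀ᶠ n : ℕ in atTop, ∀ (F : Finset (Sym2 (Fin n))) (U : Finset (Fin n)) (g : ℕ),
      IsRootSet F U η g → 0 < g →
        binomProb (C * (n : ℝ) ^ (-cliqueExponent s)) (cliqueEdges univ)
          (fun S => (rootedCliqueFamily F U (s + 1)).packingNumber S < g) ≤
          2 * (s + 1).choose 2 / g := by
  set c := C ^ ((s + 1).choose 2 - 1)
  have hlim : Tendsto (fun n : ℕ => 2 ^ (s + 3) * ((s + 2) * η * c +
      (s + 1).choose 2 * (c * (C * (n : ℝ) ^ (-cliqueExponent s))))) atTop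
      (𝓝 (2 ^ (s + 3) * ((s + 2) * η * c))) := by
    simpa using (((tendsto_const_mul_rpow_neg_cliqueExponent hs C).const_mul c).const_mul
      ((s + 1).choose 2 : ℝ)).const_add ((s + 2) * η * c) |>.const_mul (2 ^ (s + 3))
  filter_upwards [eventually_isCliqueBalanced hs hC,
    hlim.eventually_le_const (u := 1 / 2) (by linarith),
    eventually_le_mul_choose_mul_pow hs (zero_le_one.trans hC)]
    with n hbalanced hdep hcount F U g hF hg
  have hU := hF.card_le
  rw [Fintype.card_fin] at hU
  refine hF.binomProb_packingNumber_lt_le hη (by lia) hg ?_ hdep ?_ <;> rw [Fintype.card_fin]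
  · exact hbalanced
  · exact hlarge.trans (hcount #U hU)

lemma exists_eventually_binomProb_packingNumber_rootedCliqueFamily_lt_le (hs : 2 ≤ s) (hC : 1 ≤ C)
    (hlarge : 16 ≤ (1 / 4) ^ (s - 1) / (s - 1).factorial * C ^ ((s + 1).choose 2 - 1)) {η δ : ℝ}
    (hη : 0 ≤ η) (hsmall : 2 ^ (s + 3) * ((s + 2) * C ^ ((s + 1).choose 2 - 1)) * η < 1 / 2)
    (hδ : 0 < δ) :
    ∃ g₀ : ℕ, 0 < g₀ ∧ ∀ᶠ n : ℕ in atTop,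
      ∀ (F : Finset (Sym2 (Fin n))) (U : Finset (Fin n)) (g : ℕ), IsRootSet F U η g → g₀ ≤ g →
        binomProb (C * pThr s n) (cliqueEdges univ)
          (fun S => (rootedCliqueFamily F U (s + 1)).packingNumber S < g) ≤ δ := by
  have hlim := tendsto_const_div_atTop_nhds_zero_nat (2 * ((s + 1).choose 2 : ℝ))
  obtain ⟨g₀, hg₀⟩ := eventually_atTop.1
    ((eventually_gt_atTop 0).and (hlim.eventually_le_const hδ))
  refine ⟨g₀, (hg₀ g₀ le_rfl).1, ?_⟩
  filter_upwards [eventually_ge_atTop 3,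
    (isCliqueWindow_const_mul_pThr hs (one_pos.trans_le hC)).eventually_mem_Icc,
    eventually_binomProb_packingNumber_rootedCliqueFamily_lt_le hs hC hlarge hη hsmall]
    with n hn hp hpack F U g hF hg
  obtain ⟨hgpos, hgδ⟩ := hg₀ g hg
  have hle : C * (n : ℝ) ^ (-cliqueExponent s) ≤ C * pThr s n := by
    gcongr
    exact rpow_neg_cliqueExponent_le_pThr hn
  have hanti : Antitone fun S => (rootedCliqueFamily F U (s + 1)).packingNumber S < g :=
    fun _ _ hST hT => (CopyFamily.packingNumber_mono _ hST).trans_lt hT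
  calc _ ≤ _ := binomProb_le_of_antitone (by positivity) hle hp.2 _ hanti
    _ ≤ _ := hpack F U g hF hgpos
    _ ≤ δ := hgδ

end Balanced

section RandomGraph

variable {s : ℕ} {C : ℝ}

lemma Pr_eq_binomProb (n : ℕ) (p : ℝ) (P : SimpleGraph (Fin n) → Prop) :
    Pr n p P = binomProb p (cliqueEdges univ) (fun S => P (graphOfEdges S)) := by
  rw [Pr, binomProb, binomExpect_apply, card_cliqueEdges, card_univ, Fintype.card_fin]
  refine sum_nbij' (fun H => H.edgeFinset) graphOfEdges (fun H _ => ?_) (fun S _ => mem_univ _)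
    (fun H _ => by simp [graphOfEdges]) (fun S hS => ?_) (fun H _ => ?_)
  · refine mem_powerset.2 fun e he => mem_cliqueEdges.2 ⟨fun v _ => mem_univ v, ?_⟩
    exact H.not_isDiag_of_mem_edgeSet (SimpleGraph.mem_edgeFinset.1 he)
  · ext e
    simp only [graphOfEdges, SimpleGraph.mem_edgeFinset, SimpleGraph.edgeSet_fromEdgeSet,
      Set.mem_sdiff, mem_coe, Sym2.mem_diagSet, and_iff_left_iff_imp]
    exact fun he => (mem_cliqueEdges.1 (mem_powerset.1 hS he)).2
  · have hcount : edgeCount H = #H.edgeFinset := by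
      rw [edgeCount, Nat.card_eq_fintype_card, SimpleGraph.edgeFinset_card]
    have hgraph : graphOfEdges H.edgeFinset = H := by simp [graphOfEdges]
    rw [hgraph, hcount]
    split_ifs <;> simp

lemma degR_eq_degree {V : Type*} [Fintype V] (G : SimpleGraph V) (v : V) :
    degR G v = G.degree v := by
  rw [degR, Nat.card_eq_fintype_card, SimpleGraph.card_neighborSet_eq_degree]

lemma eventually_one_sub_le_Pr_exists_isCliquePacking (hs : 2 ≤ s) (hC : 1 ≤ C)
    (hlarge : 16 ≤ (1 / 4) ^ (s - 1) / (s - 1).factorial * C ^ ((s + 1).choose 2 - 1)) {η δ : ℝ}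
    (hη : 0 < η) (hsmall : 2 ^ (s + 3) * ((s + 2) * C ^ ((s + 1).choose 2 - 1)) * η < 1 / 2)
    (hδ : 0 < δ) :
    ∀ᶠ n : ℕ in atTop, ∀ (g : ℕ) (G : SimpleGraph (Fin n)),
      (g : ℝ) ≤ η / (2 * (s + 2)) * n → (∀ v, g ≤ degR G v) →
        1 - δ ≤ Pr n (C * pThr s n)
          (fun H => ∃ 𝒞, #𝒞 = g ∧ IsCliquePacking (G ⊔ H) (s + 1) 𝒞) := by
  have hwindow := isCliqueWindow_const_mul_pThr hs (one_pos.trans_le hC)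
  have hη1 : η ≤ 1 := by
    have : 1 ≤ 2 ^ (s + 3) * ((s + 2) * C ^ ((s + 1).choose 2 - 1)) := by
      refine one_le_mul_of_one_le_of_one_le (one_le_pow₀ one_le_two)
        (one_le_mul_of_one_le_of_one_le ?_ (one_le_pow₀ hC))
      linarith [s.cast_nonneg (α := ℝ)]
    linarith [le_mul_of_one_le_left hη.le this]
  obtain ⟨g₀, hg₀, hmany⟩ := exists_eventually_binomProb_packingNumber_rootedCliqueFamily_lt_le
    hs hC hlarge hη.le hsmall (half_pos hδ)
  filter_upwards [hmany, hwindow.eventually_mem_Icc,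
    hwindow.eventually_binomProb_not_cliqueRich_le hs (half_pos hη) (half_pos hδ),
    hwindow.eventually_binomProb_packingNumber_cliqueFamily_lt_le g₀ (half_pos hδ)]
    with n hmany hp hrich hfew g G hg hG
  rw [Pr_eq_binomProb, sub_le_comm, ← binomProb_not]
  refine binomProb_not_exists_isCliquePacking_le_of_le_degree (w := ⌊η / 2 * n⌋₊) hp hη1 hg₀ ?_
    (fun v => (hG v).trans_eq (degR_eq_degree G v)) hrich ?_ hmany
  · have hw : (⌊η / 2 * n⌋₊ : ℝ) ≤ η / 2 * n := Nat.floor_le (by positivity)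
    have : (s + 2) * (g : ℝ) ≤ (s + 2) * (η / (2 * (s + 2)) * n) := by gcongr
    have : (s + 2) * (η / (2 * (s + 2)) * n) = η / 2 * n := by field_simp
    rw [Fintype.card_fin]
    linarith
  · rwa [Fintype.card_fin]

end RandomGraph

end Asymptotics

/-- Lemma 4.4: for every `s ≥ 2` there are `β, C > 0` such that whenever
`g ≤ β n` and `G` is an `n`-vertex graph of minimum degree at least `g`, w.h.p. the graph
`G ∪ G_{n,p}` with `p = C ⬝ p_s(n)` contains `g` vertex-disjoint copies of `K_{s+1}`. -/
theorem statement6 (s : ℕ) (hs : 2 ≤ s) :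
    ∃ β C : ℝ, 0 < β ∧ 0 < C ∧
      ∀ δ : ℝ, 0 < δ → ∃ n₀ : ℕ, ∀ n : ℕ, n₀ ≤ n →
        ∀ g : ℕ, (g : ℝ) ≤ β * n →
          ∀ G : SimpleGraph (Fin n), (∀ v, g ≤ degR G v) →
            1 - δ ≤ Pr n (C * pThr s n)
              (fun H => ∃ 𝒞 : Finset (Finset (Fin n)), 𝒞.card = g ∧
                (∀ c ∈ 𝒞, (G ⊔ H).IsNClique (s + 1) c) ∧
                (𝒞 : Set (Finset (Fin n))).PairwiseDisjoint id) := by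
  have hedges : (s + 1).choose 2 - 1 ≠ 0 := fun h => by
    have hzero := cliqueExponent_mul_choose_sub_one hs
    rw [h, Nat.cast_zero, mul_zero] at hzero
    exact absurd hzero.symm (Nat.cast_ne_zero.2 (by lia))
  obtain ⟨C, hC, hlarge⟩ := exists_one_le_and_le_mul_pow
    (by positivity : (0 : ℝ) < (1 / 4) ^ (s - 1) / (s - 1).factorial) 16 hedges
  obtain ⟨η, hη, hsmall⟩ := exists_pos_mul_lt one_half_pos
    (2 ^ (s + 3) * ((s + 2) * C ^ ((s + 1).choose 2 - 1)))
  refine ⟨η / (2 * (s + 2)), C, by positivity, one_pos.trans_le hC, fun δ hδ => ?_⟩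
  obtain ⟨n₀, hn₀⟩ := Filter.eventually_atTop.1
    (eventually_one_sub_le_Pr_exists_isCliquePacking hs hC hlarge hη hsmall hδ)
  exact ⟨n₀, fun n hn g hg G hG => hn₀ n hn g G hg hG⟩
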